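/- Let Γ̄ be a countable subgroup of Isom X × Isom X* with finite exponential growth relative to (X × X*, d̄), and π a probability measure on Γ̄ with finite first moment and non-elementary marginals μ and μ*. Write l = l(X,μ) and h̄ = h(π) − h(∂X*,μ*). For every ε > 0 there exist N ∈ ℤ_+, a Borel set D ⊆ ∂X* with ν_{μ*}(D) ≥ 1−ε, a Borel set F ⊆ ∂X × ∂X* with ν_π^η(F) ≥ 1−ε for ν_{μ*}-almost every η ∈ D and ν_π(F) ≥ 1−ε, and a constant C_ε depending only on ε, such that for ν_{μ*}-almost every η ∈ D, all ξ ∈ ∂X and all n ≥ N: ν_π^η( (B(ξ, e^{−ln}) × ∂X*) ∩ F ) ≤ C_ε e^{−n(h̄ − ε)}. -/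

import Mathlib

open MeasureTheory Filter Topology Metric Set
open scoped ENNReal Classical

noncomputable section

namespace HMDim

/-! ### Gromov products and hyperbolicity -/

/-- The Gromov product `(x|y)_o = (d(x,o)+d(o,y)-d(x,y))/2`. -/
def gp {X : Type*} [MetricSpace X] (o x y : X) : ℝ :=
  (dist x o + dist o y - dist x y) / 2

/-- `X` is `δ`-hyperbolic. -/
def IsHyperbolicWith (X : Type*) [MetricSpace X] (δ : ℝ) : Prop :=
  ∀ x y z w : X, min (gp w x z) (gp w z y) - δ ≤ gp w x y

/-- `X` is hyperbolic: `δ`-hyperbolic for some `δ ≥ 0`. -/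
def IsHyperbolic (X : Type*) [MetricSpace X] : Prop :=
  ∃ δ : ℝ, 0 ≤ δ ∧ IsHyperbolicWith X δ

/-- `X` is `C`-roughly geodesic for some `C ≥ 0`: any two points are joined by a
`C`-rough geodesic. -/
def IsRoughGeodesicSpace (X : Type*) [MetricSpace X] : Prop :=
  ∃ C : ℝ, 0 ≤ C ∧ ∀ x y : X, ∃ (b : ℝ) (γ : ℝ → X), 0 ≤ b ∧ γ 0 = x ∧ γ b = y ∧
    ∀ s ∈ Set.Icc (0:ℝ) b, ∀ t ∈ Set.Icc (0:ℝ) b, abs (dist (γ s) (γ t) - |s - t|) ≤ C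

/-- Bounded growth at some scale: there are `0 < r < R` and `N` such that every ball of
radius `R` is covered by at most `N` balls of radius `r`. -/
def HasBoundedGrowthAtSomeScale (X : Type*) [MetricSpace X] : Prop :=
  ∃ (r R : ℝ) (N : ℕ), 0 < r ∧ r < R ∧
    ∀ x : X, ∃ s : Finset X, s.card ≤ N ∧ Metric.ball x R ⊆ ⋃ y ∈ s, Metric.ball y r

/-! ### The Gromov boundary -/

/-- A sequence is divergent if it is Cauchy for the Gromov-product quasi-metric, i.e.
`(u n | u m)_o → ∞`. -/
def IsDivergent {X : Type*} [MetricSpace X] (o : X) (u : ℕ → X) : Prop :=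
  Tendsto (fun pr : ℕ × ℕ => gp o (u pr.1) (u pr.2)) atTop atTop

/-- The type of divergent sequences. -/
def DivSeq (X : Type*) [MetricSpace X] (o : X) : Type _ := {u : ℕ → X // IsDivergent o u}

/-- Two divergent sequences are equivalent when `(u n | v m)_o → ∞`. -/
def bndRel {X : Type*} [MetricSpace X] (o : X) (u v : DivSeq X o) : Prop :=
  Tendsto (fun pr : ℕ × ℕ => gp o (u.1 pr.1) (v.1 pr.2)) atTop atTop

/-- The Gromov boundary: equivalence classes of divergent sequences. -/
def Boundary (X : Type*) [MetricSpace X] (o : X) : Type _ := Quot (bndRel o)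

/-- The boundary point of a divergent sequence. -/
def mkB {X : Type*} [MetricSpace X] (o : X) (u : DivSeq X o) : Boundary X o :=
  Quot.mk _ u

/-- The extended Gromov product of two boundary points: the infimum over pairs of
representatives of the liminf of Gromov products. -/
def gpB {X : Type*} [MetricSpace X] (o : X) (ξ η : Boundary X o) : ℝ :=
  sInf {t : ℝ | ∃ u v : DivSeq X o, mkB o u = ξ ∧ mkB o v = η ∧
    t = Filter.liminf (fun pr : ℕ × ℕ => gp o (u.1 pr.1) (v.1 pr.2)) atTop}

/-- The quasi-metric `q(ξ,η) = exp(-(ξ|η)_o)` on the boundary (`0` on the diagonal). -/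
def qB {X : Type*} [MetricSpace X] (o : X) (ξ η : Boundary X o) : ℝ :=
  if ξ = η then 0 else Real.exp (-(gpB o ξ η))

/-- The extended Gromov product of an interior point with a boundary point. -/
def gpXB {X : Type*} [MetricSpace X] (o : X) (x : X) (ξ : Boundary X o) : ℝ :=
  sInf {t : ℝ | ∃ u : DivSeq X o, mkB o u = ξ ∧
    t = Filter.liminf (fun m : ℕ => gp o x (u.1 m)) atTop}

/-- Quasi-metric between an interior point and a boundary point. -/
def qXB {X : Type*} [MetricSpace X] (o : X) (x : X) (ξ : Boundary X o) : ℝ :=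
  Real.exp (-(gpXB o x ξ))

/-- The open ball of a quasi-metric. -/
def qball {A : Type*} (q : A → A → ℝ) (ξ : A) (r : ℝ) : Set A := {η | q ξ η < r}

/-- The max quasi-metric `q̄` on the product of two boundaries. -/
def qbb {X Xs : Type*} [MetricSpace X] [MetricSpace Xs] (o : X) (os : Xs)
    (ξ η : Boundary X o × Boundary Xs os) : ℝ :=
  max (qB o ξ.1 η.1) (qB os ξ.2 η.2)

/-- Boundaries are measurable spaces, with the σ-algebra generated by quasi-metric balls. -/
instance (X : Type*) [MetricSpace X] (o : X) : MeasurableSpace (Boundary X o) :=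
  MeasurableSpace.generateFrom {s | ∃ ξ r, s = qball (qB o) ξ r}

/-! ### The boundary action of isometries -/

lemma gp_isometry_le {X : Type*} [MetricSpace X] (o : X) (g : X ≃ᵢ X) (x y : X) :
    gp o x y - dist o (g o) ≤ gp o (g x) (g y) := by
  have e1 : dist (g x) (g o) = dist x o := g.dist_eq x o
  have e2 : dist (g o) (g y) = dist o y := g.dist_eq o y
  have e3 : dist (g x) (g y) = dist x y := g.dist_eq x y
  have e4 : dist (g o) o = dist o (g o) := dist_comm _ _
  have t1 : dist (g x) (g o) ≤ dist (g x) o + dist o (g o) := dist_triangle _ _ _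
  have t2 : dist (g o) (g y) ≤ dist (g o) o + dist o (g y) := dist_triangle _ _ _
  simp only [gp]
  linarith [t1, t2, e1, e2, e3, e4]

lemma isDivergent_comp {X : Type*} [MetricSpace X] (o : X) (g : X ≃ᵢ X) {u : ℕ → X}
    (h : IsDivergent o u) : IsDivergent o fun n => g (u n) := by
  have h' := tendsto_atTop_add_const_right atTop (-(dist o (g o)))
    (h : Tendsto (fun pr : ℕ × ℕ => gp o (u pr.1) (u pr.2)) atTop atTop)
  refine tendsto_atTop_mono (fun pr => ?_) h'
  have := gp_isometry_le o g (u pr.1) (u pr.2)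
  simpa [sub_eq_add_neg] using this

lemma bndRel_comp {X : Type*} [MetricSpace X] (o : X) (g : X ≃ᵢ X) {u v : DivSeq X o}
    (h : bndRel o u v) :
    bndRel o ⟨fun n => g (u.1 n), isDivergent_comp o g u.2⟩
      ⟨fun n => g (v.1 n), isDivergent_comp o g v.2⟩ := by
  have h' := tendsto_atTop_add_const_right atTop (-(dist o (g o)))
    (h : Tendsto (fun pr : ℕ × ℕ => gp o (u.1 pr.1) (v.1 pr.2)) atTop atTop)
  refine tendsto_atTop_mono (fun pr => ?_) h'
  have := gp_isometry_le o g (u.1 pr.1) (v.1 pr.2)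
  simpa [sub_eq_add_neg] using this

/-- The induced action of an isometry on the Gromov boundary. -/
def bAct {X : Type*} [MetricSpace X] (o : X) (g : X ≃ᵢ X) :
    Boundary X o → Boundary X o :=
  Quot.map (fun u : DivSeq X o =>
      (⟨fun n => g (u.1 n), isDivergent_comp o g u.2⟩ : DivSeq X o))
    (fun _ _ h => bndRel_comp o g h)

/-! ### Random walks on countable groups -/

/-- Convolution of two measures (as `ℝ≥0∞`-valued functions) on a group. -/
def conv {G : Type*} [Group G] (p q : G → ℝ≥0∞) : G → ℝ≥0∞ :=
  fun x => ∑' y : G, p y * q (y⁻¹ * x)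

/-- The `n`-fold convolution power `π_n` of `p`. -/
def piN {G : Type*} [Group G] (p : G → ℝ≥0∞) : ℕ → G → ℝ≥0∞
  | 0 => fun x => if x = 1 then 1 else 0
  | n + 1 => conv (piN p n) p

/-- The Shannon entropy `H(π_n)` of the `n`-th convolution power. -/
def entropySeq {G : Type*} [Group G] (p : G → ℝ≥0∞) (n : ℕ) : ℝ :=
  ∑' x : G, Real.negMulLog ((piN p n x).toReal)

/-- The first moment of `π_n` with respect to a displacement function `f`. -/
def momentSeq {G : Type*} [Group G] (p : G → ℝ≥0∞) (f : G → ℝ) (n : ℕ) : ℝ :=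
  ∑' x : G, (piN p n x).toReal * f x

/-- `h` is the asymptotic entropy of the `p`-random walk:
`h = lim (1/n) H(π_n)`. -/
def HasEntropy {G : Type*} [Group G] (p : G → ℝ≥0∞) (h : ℝ) : Prop :=
  Tendsto (fun n : ℕ => entropySeq p n / n) atTop (nhds h)

/-- `l` is the drift (rate of escape) of the `p`-random walk with respect to the
displacement `f`: `l = lim (1/n) Σ_x f(x) π_n(x)`. -/
def HasDrift {G : Type*} [Group G] (p : G → ℝ≥0∞) (f : G → ℝ) (l : ℝ) : Prop :=
  Tendsto (fun n : ℕ => momentSeq p f n / n) atTop (nhds l)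

/-- `p` is a probability distribution. -/
def IsProb {G : Type*} (p : G → ℝ≥0∞) : Prop := ∑' x : G, p x = 1

/-- Finite first moment with respect to a displacement function `f`. -/
def FiniteFirstMoment {G : Type*} (p : G → ℝ≥0∞) (f : G → ℝ) : Prop :=
  ∑' x : G, p x * ENNReal.ofReal (f x) ≠ ∞

/-- The pushforward of a distribution `p` by a map `f` (e.g. a marginal). -/
def marginalStar {G A : Type*} (p : G → ℝ≥0∞) (f : G → A) : A → ℝ≥0∞ :=
  fun a => ∑' x : G, if f x = a then p x else 0

/-- A subgroup is non-elementary (in the relevant sense) if it contains a free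
subgroup of rank 2. -/
def IsNonElementarySubgroup {G : Type*} [Group G] (H : Subgroup G) : Prop :=
  ∃ φ : FreeGroup (Fin 2) →* G, Function.Injective φ ∧ φ.range ≤ H

/-- A measure `p` on a group is non-elementary if the subgroup generated by its
support contains a free subgroup of rank 2. -/
def IsNonElemMeasure {G : Type*} [Group G] (p : G → ℝ≥0∞) : Prop :=
  IsNonElementarySubgroup (Subgroup.closure {x : G | p x ≠ 0})

/-- A group containing a free subgroup of rank 2 (a non-elementary group). -/
def HasFreeSubgroup (G : Type*) [Group G] : Prop :=
  ∃ φ : FreeGroup (Fin 2) →* G, Function.Injective φ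

/-! ### Path space -/

/-- The position `w_n = x_1 ⋯ x_n` of the random walk with increments `ω`. -/
def walk {G : Type*} [Group G] (ω : ℕ → G) (n : ℕ) : G := ((List.range n).map ω).prod

/-- The cylinder set `[w̄_0, …, w̄_n]` of trajectories whose positions agree with those
of `ω` up to time `n`. -/
def cyl {G : Type*} [Group G] (ω : ℕ → G) (n : ℕ) : Set (ℕ → G) :=
  {ω' | ∀ i ≤ n, walk ω' i = walk ω i}

/-- `P` is the distribution of the increments of the `p`-random walk: the product
measure `p^{⊗ℕ}` on the path space. -/
def IsRWMeasure {G : Type*} [Group G] [MeasurableSpace G] (p : G → ℝ≥0∞)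
    (P : Measure (ℕ → G)) : Prop :=
  IsProbabilityMeasure P ∧
    ∀ (n : ℕ) (g : ℕ → G), P {ω | ∀ i < n, ω i = g i} = ∏ i ∈ Finset.range n, p (g i)

/-- `ν` is the harmonic measure on the boundary of `X` for the random walk with path
measure `P` and orbit map `z`: the image of `P` under the a.s.-defined boundary map. -/
def IsHarmonic {Ω X : Type*} [MeasurableSpace Ω] [MetricSpace X] (o : X)
    (P : Measure Ω) (z : Ω → ℕ → X) (ν : Measure (Boundary X o)) : Prop :=
  ∃ bnd : Ω → Boundary X o, Measurable bnd ∧ ν = P.map bnd ∧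
    ∀ᵐ ω ∂P, ∃ h : IsDivergent o (z ω), bnd ω = mkB o ⟨z ω, h⟩

/-- `ν` is the harmonic measure on the product of the boundaries of `X` and `Xs` for
the random walk with path measure `P` and orbit maps `z`, `zs`. -/
def IsJointHarmonic {Ω X Xs : Type*} [MeasurableSpace Ω] [MetricSpace X] [MetricSpace Xs]
    (o : X) (os : Xs) (P : Measure Ω) (z : Ω → ℕ → X) (zs : Ω → ℕ → Xs)
    (ν : Measure (Boundary X o × Boundary Xs os)) : Prop :=
  ∃ bnd : Ω → Boundary X o × Boundary Xs os, Measurable bnd ∧ ν = P.map bnd ∧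
    ∀ᵐ ω ∂P, ∃ (h1 : IsDivergent o (z ω)) (h2 : IsDivergent os (zs ω)),
      bnd ω = (mkB o ⟨z ω, h1⟩, mkB os ⟨zs ω, h2⟩)

/-- `cond` is a disintegration (system of conditional measures) of `P` with respect to
the map `f`, over the pushforward `νB = f_* P`. -/
def IsDisintegration {A B : Type*} [MeasurableSpace A] [MeasurableSpace B]
    (P : Measure A) (f : A → B) (νB : Measure B) (cond : B → Measure A) : Prop :=
  νB = P.map f ∧ (∀ᵐ b ∂νB, IsProbabilityMeasure (cond b)) ∧
    (∀ᵐ b ∂νB, cond b (f ⁻¹' {b}) = 1) ∧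
    ∀ s : Set A, MeasurableSet s → P s = ∫⁻ b, cond b s ∂νB

/-! ### Hausdorff dimension for quasi-metrics -/

/-- Diameter of a set for a quasi-metric. -/
def qdiam {A : Type*} (q : A → A → ℝ) (E : Set A) : ℝ≥0∞ :=
  ⨆ x ∈ E, ⨆ y ∈ E, ENNReal.ofReal (q x y)

/-- Hausdorff pre-measure (content) at scale `Δ`. -/
def qHContent {A : Type*} (q : A → A → ℝ) (α Δ : ℝ) (E : Set A) : ℝ≥0∞ :=
  ⨅ (c : ℕ → Set A) (_ : E ⊆ ⋃ i, c i) (_ : ∀ i, qdiam q (c i) ≤ ENNReal.ofReal Δ),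
    ∑' i, qdiam q (c i) ^ α

/-- The `α`-dimensional Hausdorff measure of a set for a quasi-metric. -/
def qHMeasure {A : Type*} (q : A → A → ℝ) (α : ℝ) (E : Set A) : ℝ≥0∞ :=
  ⨆ (Δ : ℝ) (_ : 0 < Δ), qHContent q α Δ E

/-- The Hausdorff dimension of a set for a quasi-metric. -/
def qdimSet {A : Type*} (q : A → A → ℝ) (E : Set A) : ℝ :=
  sSup {α : ℝ | 0 ≤ α ∧ 0 < qHMeasure q α E}

/-- The upper Hausdorff dimension of a measure. -/
def qdimUpper {A : Type*} [MeasurableSpace A] (q : A → A → ℝ) (ν : Measure A) : ℝ :=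
  sInf {d : ℝ | ∃ E : Set A, MeasurableSet E ∧ ν Eᶜ = 0 ∧ d = qdimSet q E}

/-- The lower Hausdorff dimension of a measure. -/
def qdimLower {A : Type*} [MeasurableSpace A] (q : A → A → ℝ) (ν : Measure A) : ℝ :=
  sInf {d : ℝ | ∃ E : Set A, MeasurableSet E ∧ 0 < ν E ∧ d = qdimSet q E}

/-- The Hausdorff dimension of `ν` exists and equals `D`. -/
def HasDim {A : Type*} [MeasurableSpace A] (q : A → A → ℝ) (ν : Measure A) (D : ℝ) : Prop :=
  qdimUpper q ν = D ∧ qdimLower q ν = D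

/-- `ν` is exact dimensional with dimension `D` for the quasi-metric `q`:
`lim_{r→0} log ν(B(ξ,r))/log r = D` for `ν`-a.e. `ξ`. -/
def ExactDim {A : Type*} [MeasurableSpace A] (q : A → A → ℝ) (ν : Measure A) (D : ℝ) : Prop :=
  ∀ᵐ ξ ∂ν, Tendsto (fun r : ℝ => Real.log (ν (qball q ξ r)).toReal / Real.log r)
    (nhdsWithin 0 (Set.Ioi 0)) (nhds D)

/-! ### Differential entropy -/

/-- The differential entropy
`h(∂X*, μ*) = Σ_g μ*(g) ∫ log (d gν/dν) d(gν)` of a measure on the isometry group with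
respect to a boundary measure. -/
def diffEntropy {Xs : Type*} [MetricSpace Xs] (os : Xs) (pstar : (Xs ≃ᵢ Xs) → ℝ≥0∞)
    (νs : Measure (Boundary Xs os)) : ℝ :=
  ∑' g : (Xs ≃ᵢ Xs), (pstar g).toReal *
    ∫ η, Real.log ((Measure.rnDeriv (νs.map (bAct os g)) νs η).toReal)
      ∂(νs.map (bAct os g))

/-! ### Word metrics and hyperbolic groups -/

/-- The word length of `g` with respect to a (symmetrized) generating set `S`. -/
def wordLength {G : Type*} [Group G] (S : Set G) (g : G) : ℕ :=
  sInf {n : ℕ | ∃ f : Fin n → G, (∀ i, f i ∈ S ∨ (f i)⁻¹ ∈ S) ∧ g = (List.ofFn f).prod}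

/-- The metric of `G` is quasi-isometric to a word metric of a finite generating set. -/
def IsQIToWordMetric (G : Type*) [Group G] [MetricSpace G] : Prop :=
  ∃ S : Finset G, Subgroup.closure (S : Set G) = ⊤ ∧
    ∃ Λ c : ℝ, 1 ≤ Λ ∧ 0 ≤ c ∧ ∀ g : G,
      (wordLength (S : Set G) g : ℝ) / Λ - c ≤ dist (1 : G) g ∧
      dist (1 : G) g ≤ Λ * (wordLength (S : Set G) g) + c

/-- The metric of `G` is left invariant. -/
def LeftInvariantMetric (G : Type*) [Group G] [MetricSpace G] : Prop :=
  ∀ g x y : G, dist (g * x) (g * y) = dist x y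

/-- `G`, with its metric, is a hyperbolic group: the metric is left invariant,
hyperbolic and quasi-isometric to a word metric. -/
def IsHypGroupMetric (G : Type*) [Group G] [MetricSpace G] : Prop :=
  LeftInvariantMetric G ∧ IsHyperbolic G ∧ IsQIToWordMetric G

/-! ### Groups of isometries of a product -/

/-- First component of an element of a subgroup of `Isom X × Isom X*`. -/
def proj1 {X Xs : Type*} [MetricSpace X] [MetricSpace Xs]
    {Γb : Subgroup ((X ≃ᵢ X) × (Xs ≃ᵢ Xs))} (γ : Γb) : X ≃ᵢ X :=
  (γ : (X ≃ᵢ X) × (Xs ≃ᵢ Xs)).1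

/-- Second component of an element of a subgroup of `Isom X × Isom X*`. -/
def proj2 {X Xs : Type*} [MetricSpace X] [MetricSpace Xs]
    {Γb : Subgroup ((X ≃ᵢ X) × (Xs ≃ᵢ Xs))} (γ : Γb) : Xs ≃ᵢ Xs :=
  (γ : (X ≃ᵢ X) × (Xs ≃ᵢ Xs)).2

/-- Displacement `d̄(ō, γ·ō)` of the base point `ō = (o,o*)` (the metric of the product
is the max metric). -/
def disp {X Xs : Type*} [MetricSpace X] [MetricSpace Xs]
    {Γb : Subgroup ((X ≃ᵢ X) × (Xs ≃ᵢ Xs))} (o : X) (os : Xs) (γ : Γb) : ℝ :=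
  dist (o, os) (proj1 γ o, proj2 γ os)

/-- Finite exponential growth relative to a displacement function `f`:
`#{x : f(x) < r} ≤ c e^{c r}`. -/
def FinExpGrowth {G : Type*} (f : G → ℝ) : Prop :=
  ∃ c : ℝ, 0 < c ∧ ∀ r : ℝ, 0 < r →
    {x : G | f x < r}.Finite ∧ ({x : G | f x < r}.ncard : ℝ) ≤ c * Real.exp (c * r)

/-! ### The events of Lemmas `A` and `E_n(η)` -/

/-- The event `A_{ε,n} = ∩_{t ≥ n} {z̄_∞ exists and q̄(z̄_t, z̄_∞) ≤ e^{-(l*-ε)n}}`. -/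
def Aev {X Xs : Type*} [MetricSpace X] [MetricSpace Xs]
    (Γb : Subgroup ((X ≃ᵢ X) × (Xs ≃ᵢ Xs))) (o : X) (os : Xs) (ε lst : ℝ) (n : ℕ) :
    Set (ℕ → Γb) :=
  {ω | ∃ (h1 : IsDivergent o (fun t => proj1 (walk ω t) o))
        (h2 : IsDivergent os (fun t => proj2 (walk ω t) os)),
      ∀ t, n ≤ t →
        max (qXB o (proj1 (walk ω t) o) (mkB o ⟨_, h1⟩))
            (qXB os (proj2 (walk ω t) os) (mkB os ⟨_, h2⟩))
          ≤ Real.exp (-((lst - ε) * n))}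

/-- The event
`E_{ε,n}(η) = {P^η([w̄_0,…,w̄_n] ∩ A_{ε,n}) ≤ e^{n(h*+ε)} P([w̄_0,…,w̄_n] ∩ A_{ε,n})}`. -/
def Eev {X Xs : Type*} [MetricSpace X] [MetricSpace Xs]
    (Γb : Subgroup ((X ≃ᵢ X) × (Xs ≃ᵢ Xs))) [MeasurableSpace Γb] (o : X) (os : Xs)
    (P : Measure (ℕ → Γb)) (condP : Boundary Xs os → Measure (ℕ → Γb))
    (hst ε lst : ℝ) (η : Boundary Xs os) (n : ℕ) : Set (ℕ → Γb) :=
  {ω | condP η (cyl ω n ∩ Aev Γb o os ε lst n) ≤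
        ENNReal.ofReal (Real.exp (n * (hst + ε))) * P (cyl ω n ∩ Aev Γb o os ε lst n)}

/-! ### Special measures -/

/-- The measure `π^ρ = ρ μ×μ + (1-ρ) μ_diag` on `Γ × Γ`. -/
def pRho {Γ : Type*} (p : Γ → ℝ≥0∞) (ρ : ℝ) : Γ × Γ → ℝ≥0∞ :=
  fun g => ENNReal.ofReal ρ * (p g.1 * p g.2) +
    ENNReal.ofReal (1 - ρ) * (if g.1 = g.2 then p g.1 else 0)

/-- The uniform distribution on the symmetrized free basis of `F_{m+1}`. -/
def symFreeBasisUniform (m : ℕ) : FreeGroup (Fin (m + 1)) → ℝ≥0∞ :=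
  fun g => if ∃ i : Fin (m + 1), g = FreeGroup.of i ∨ g = (FreeGroup.of i)⁻¹
    then ENNReal.ofReal (1 / (2 * (m + 1))) else 0

/-- The homomorphism `F_{m+1} → F_m` sending `x_i ↦ y_i` for `i ≤ m` and `x_{m+1} ↦ 1`. -/
def projHom (m : ℕ) : FreeGroup (Fin (m + 1)) →* FreeGroup (Fin m) :=
  FreeGroup.lift (fun i => if h : (i : ℕ) < m then FreeGroup.of (⟨i, h⟩ : Fin m) else 1)

/-!
Fix `η`. Conditioning the random walk on its limit `η` in `∂X*` multiplies the law of the first `n`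
steps by the Radon–Nikodym cocycle, an ergodic average growing like `exp (n h(∂X*, μ*))`, while
the unconditioned probability of the position `w̄_n` decays like `exp (-n h(π))`. Hence, along a
typical trajectory, the conditional probability of being in the same position at time `n` is at most
about `exp (-n h̄)`.

A ball of radius `exp (-ln)` in `∂X` only sees few positions. Sublinear tracking places `w_n o` and
`w*_n o*` at distance about `ln` and `l* n` on the way to their limits `ξ` and `η`, so by
hyperbolicity two typical trajectories ending in `B(ξ, exp (-ln)) × {η}` have positions at time `n`
within `O(τ n)` of each other in `X × X*`. Exponential growth leaves at most `exp (O(τ n))` such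
positions, and the bound follows by summing over them. Egorov's theorem makes typicality uniform in
`n` on a set `W` of trajectories; `F` is the set of boundary points conditioned on which `W` has
probability at least `1/2`.
-/

/-! ### Subadditive cocycles over ergodic maps -/

section Ergodic

variable {Ω : Type*} {T : Ω → Ω} {g : ℕ → Ω → ℝ} {f c : Ω → ℝ} {B : Set Ω} {a h : ℝ} {K : ℕ}

/-- The error term in the covering argument for lower bounds of subadditive cocycles: an orbit
segment of length `M` pays `c` at each of its times in the exceptional set `B`, and at each of its
last `K` times. -/
def coveringError (T : Ω → Ω) (B : Set Ω) (c : Ω → ℝ) (K M : ℕ) (ω : Ω) : ℝ :=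
  ∑ i ∈ Finset.range M, (B.indicator c (T^[i] ω) + if M ≤ i + K then c (T^[i] ω) else 0)

lemma coveringError_zero (ω : Ω) : coveringError T B c K 0 ω = 0 := by
  simp [coveringError]

lemma coveringError_succ (M : ℕ) (ω : Ω) :
    coveringError T B c K (M + 1) ω = coveringError T B c K M (T ω) +
      (B.indicator c ω + if M + 1 ≤ K then c ω else 0) := by
  simp [coveringError, Finset.sum_range_succ', add_right_comm _ 1 K]

lemma coveringError_iterate_le (hc : ∀ ω, 0 ≤ c ω) (n M : ℕ) (ω : Ω) :
    coveringError T B c K M (T^[n] ω) ≤ coveringError T B c K (M + n) ω := by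
  induction n generalizing ω with
  | zero => simp
  | succ n ih =>
    rw [Function.iterate_succ_apply, ← add_assoc, coveringError_succ]
    have hstep : 0 ≤ B.indicator c ω + if M + n + 1 ≤ K then c ω else 0 :=
      add_nonneg (indicator_nonneg (fun x _ => hc x) ω) (by split_ifs <;> simp [hc])
    linarith [ih (T ω)]

lemma add_coveringError_le_coveringError_succ (hc : ∀ ω, 0 ≤ c ω) {M : ℕ} {ω : Ω}
    (h : M + 1 ≤ K ∨ ω ∈ B) :
    c ω + coveringError T B c K M (T ω) ≤ coveringError T B c K (M + 1) ω := by
  have hB : 0 ≤ B.indicator c ω := indicator_nonneg (fun x _ => hc x) ω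
  rw [coveringError_succ]
  rcases h with hK | hω
  · rw [if_pos hK]
    linarith
  · rw [indicator_of_mem hω]
    split_ifs <;> linarith [hc ω]

/-- Off `B` one jumps ahead by a time at which `g` grows at rate at most `a`; on `B`, and near the
end of the orbit segment, one advances by a single step. -/
lemma le_mul_add_coveringError (hc : ∀ ω, 0 ≤ c ω) (hzero : ∀ ω, g 0 ω = 0)
    (hone : ∀ ω, g 1 ω ≤ a + c ω)
    (hB : ∀ ω ∉ B, ∃ k, 1 ≤ k ∧ k ≤ K ∧ g k ω ≤ a * k) (M : ℕ) (ω : Ω)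
    (hsub : ∀ k n m, g (n + m) (T^[k] ω) ≤ g n (T^[k] ω) + g m (T^[n] (T^[k] ω))) :
    g M ω ≤ a * M + coveringError T B c K M ω := by
  induction M using Nat.strong_induction_on generalizing ω with
  | _ M ih =>
    have hsub_iterate (j k n m : ℕ) : g (n + m) (T^[k] (T^[j] ω)) ≤
        g n (T^[k] (T^[j] ω)) + g m (T^[n] (T^[k] (T^[j] ω))) := by
      simpa only [Function.iterate_add_apply] using hsub (k + j) n m
    obtain _ | M := M
    · simp [hzero, coveringError_zero]
    by_cases hcase : M + 1 ≤ K ∨ ω ∈ B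
    · have hstep := hsub 0 1 M
      have hrest := ih M (by omega) (T ω) (hsub_iterate 1)
      have herr := add_coveringError_le_coveringError_succ (T := T) hc hcase
      simp only [Function.iterate_zero, id, Function.iterate_one, add_comm 1 M] at hstep
      push_cast
      linarith [hone ω]
    · push Not at hcase
      obtain ⟨k, hk, hkK, hgk⟩ := hB ω hcase.2
      obtain ⟨m, hm⟩ : ∃ m, M + 1 = k + m := ⟨M + 1 - k, by omega⟩
      have hjump := hsub 0 k m
      have hrest := ih m (by omega) (T^[k] ω) (hsub_iterate k)
      have herr := coveringError_iterate_le (T := T) (B := B) (K := K) hc k m ω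
      simp only [Function.iterate_zero, id] at hjump
      rw [hm, add_comm k m] at *
      push_cast
      linarith

/-- The block sums `∑ r < M, g (n + r) ω` increase by at most `g M (T^[n] ω)` at each step. -/
lemma mul_le_add_birkhoffSum {ω : Ω}
    (hsub : ∀ n m, g (n + m) ω ≤ g n ω + g m (T^[n] ω)) (M n : ℕ) :
    M * g (n + M) ω ≤ ∑ r ∈ Finset.range M, g r ω + birkhoffSum T (g M) n ω +
      ∑ r ∈ Finset.range M, g (M - r) (T^[n + r] ω) := by
  have hblock (n : ℕ) :
      ∑ r ∈ Finset.range M, g (n + r) ω ≤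
        ∑ r ∈ Finset.range M, g r ω + birkhoffSum T (g M) n ω := by
    induction n with
    | zero => simp
    | succ n ih =>
      have hshift := (Finset.sum_range_succ' (fun r => g (n + r) ω) M).symm.trans
        (Finset.sum_range_succ (fun r => g (n + r) ω) M)
      simp only [← add_assoc, add_right_comm n _ 1] at hshift
      rw [birkhoffSum_succ]
      simp only [add_zero] at hshift
      linarith [hsub n M]
  calc M * g (n + M) ω = ∑ _r ∈ Finset.range M, g (n + M) ω := by simp
    _ ≤ ∑ r ∈ Finset.range M, (g (n + r) ω + g (M - r) (T^[n + r] ω)) := by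
      refine Finset.sum_le_sum fun r hr => ?_
      have hrM : n + M = n + r + (M - r) := by
        have := Finset.mem_range.1 hr
        omega
      exact hrM ▸ hsub (n + r) (M - r)
    _ ≤ _ := by
      rw [Finset.sum_add_distrib]
      linarith [hblock n]

lemma ae_tendsto_of_forall_ae_eventually {ι : Type*} {mΩ : MeasurableSpace Ω} {P : Measure Ω}
    {l : Filter ι} {u : ι → Ω → ℝ} {L : ℝ}
    (hlower : ∀ a < L, ∀ᵐ ω ∂P, ∀ᶠ n in l, a ≤ u n ω)
    (hupper : ∀ b > L, ∀ᵐ ω ∂P, ∀ᶠ n in l, u n ω ≤ b) :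
    ∀ᵐ ω ∂P, Tendsto (fun n => u n ω) l (𝓝 L) := by
  have hlower' : ∀ᵐ ω ∂P, ∀ q : ℚ, (q : ℝ) < L → ∀ᶠ n in l, (q : ℝ) ≤ u n ω :=
    ae_all_iff.2 fun q => eventually_imp_distrib_left.2 (hlower q)
  have hupper' : ∀ᵐ ω ∂P, ∀ q : ℚ, L < q → ∀ᶠ n in l, u n ω ≤ q :=
    ae_all_iff.2 fun q => eventually_imp_distrib_left.2 (hupper q)
  filter_upwards [hlower', hupper'] with ω hl hu
  refine tendsto_order.2 ⟨fun a ha => ?_, fun b hb => ?_⟩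
  · obtain ⟨q, haq, hqL⟩ := exists_rat_btwn ha
    exact (hl q hqL).mono fun n hn => haq.trans_le hn
  · obtain ⟨q, hLq, hqb⟩ := exists_rat_btwn hb
    exact (hu q hLq).mono fun n hn => hn.trans_lt hqb

variable [MeasurableSpace Ω] {P : Measure Ω}

lemma integral_comp_of_measurePreserving (hT : MeasurePreserving T P P)
    (hf : AEStronglyMeasurable f P) : ∫ ω, f (T ω) ∂P = ∫ ω, f ω ∂P := by
  conv_rhs => rw [← hT.map_eq]
  rw [integral_map hT.measurable.aemeasurable (by rwa [hT.map_eq])]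

lemma integrable_coveringError (hT : MeasurePreserving T P P) (hB : MeasurableSet B)
    (hc : Integrable c P) (M : ℕ) : Integrable (coveringError T B c K M) P := by
  refine integrable_finsetSum _ fun i _ => ?_
  have hTi := hT.iterate i
  refine (hTi.integrable_comp_of_integrable (hc.indicator hB)).add ?_
  split_ifs
  · exact hTi.integrable_comp_of_integrable hc
  · exact integrable_zero _ _ _

lemma integral_coveringError (hT : MeasurePreserving T P P) (hB : MeasurableSet B)
    (hc : Integrable c P) (M : ℕ) :
    ∫ ω, coveringError T B c K M ω ∂P =
      M * ∫ ω in B, c ω ∂P + (min M K : ℕ) * ∫ ω, c ω ∂P := by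
  induction M with
  | zero => simp [coveringError_zero]
  | succ M ih =>
    have hind := hc.indicator hB
    have hlast : Integrable (fun ω => if M + 1 ≤ K then c ω else 0) P := by
      split_ifs
      · exact hc
      · exact integrable_zero _ _ _
    have herr := integrable_coveringError (K := K) hT hB hc M
    have hshift : ∫ ω, coveringError T B c K M (T ω) ∂P = _ :=
      integral_comp_of_measurePreserving hT herr.aestronglyMeasurable
    simp only [coveringError_succ]
    have hsum := integral_add (hT.integrable_comp_of_integrable herr) (hind.add hlast)
    simp only [Function.comp_apply, Pi.add_apply] at hsum
    rw [hsum, integral_add hind hlast, integral_indicator hB, hshift, ih]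
    by_cases hMK : M + 1 ≤ K
    · rw [min_eq_left hMK, min_eq_left (by omega)]
      simp only [hMK, if_true]
      push_cast
      ring
    · rw [min_eq_right (by omega : K ≤ M + 1), min_eq_right (by omega : K ≤ M)]
      simp only [hMK, if_false, integral_zero]
      push_cast
      ring

/-- A subadditive cocycle over `T` in the sense of Kingman's theorem, with every term integrable. -/
structure IsSubadditiveCocycle (T : Ω → Ω) (P : Measure Ω) (g : ℕ → Ω → ℝ) : Prop where
  measurable : ∀ n, Measurable (g n)
  integrable : ∀ n, Integrable (g n) P
  zero : ∀ ω, g 0 ω = 0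
  ae_subadditive : ∀ᵐ ω ∂P, ∀ n m, g (n + m) ω ≤ g n ω + g m (T^[n] ω)

lemma isSubadditiveCocycle_birkhoffSum (hT : MeasurePreserving T P P) (hf : Measurable f)
    (hfi : Integrable f P) :
    IsSubadditiveCocycle T P (birkhoffSum T f) where
  measurable n := Finset.measurable_sum _ fun k _ => hf.comp (hT.measurable.iterate k)
  integrable n := integrable_finsetSum _ fun k _ =>
    (hT.iterate k).integrable_comp_of_integrable hfi
  zero ω := by simp
  ae_subadditive := ae_of_all _ fun ω n m => (birkhoffSum_add T f n m ω).le

/-- The points along whose orbit `g n / n` drops infinitely often below a fixed rational rate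
smaller than `a`. -/
def slowSet (g : ℕ → Ω → ℝ) (a : ℝ) : Set Ω :=
  {ω | ∃ b : ℚ, (b : ℝ) < a ∧ ∃ᶠ n : ℕ in atTop, g n ω < b * n}

namespace IsSubadditiveCocycle

lemma of_integrable_one (hT : MeasurePreserving T P P) (hmeas : ∀ n, Measurable (g n))
    (hone : Integrable (g 1) P) (hzero : ∀ ω, g 0 ω = 0) (hnonneg : ∀ n ω, 0 ≤ g n ω)
    (hsub : ∀ᵐ ω ∂P, ∀ n m, g (n + m) ω ≤ g n ω + g m (T^[n] ω)) :
    IsSubadditiveCocycle T P g where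
  measurable := hmeas
  integrable n := by
    induction n with
    | zero => exact (integrable_zero _ _ _).congr (ae_of_all _ fun ω => (hzero ω).symm)
    | succ n ih =>
      refine (ih.add ((hT.iterate n).integrable_comp_of_integrable hone)).mono'
        (hmeas _).aestronglyMeasurable ?_
      filter_upwards [hsub] with ω hω
      rw [Real.norm_of_nonneg (hnonneg _ _)]
      exact hω n 1
  zero := hzero
  ae_subadditive := hsub

variable (hg : IsSubadditiveCocycle T P g)
include hg

lemma ae_subadditive_iterate (hT : MeasurePreserving T P P) :
    ∀ᵐ ω ∂P, ∀ k n m, g (n + m) (T^[k] ω) ≤ g n (T^[k] ω) + g m (T^[n] (T^[k] ω)) :=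
  ae_all_iff.2 fun k => (hT.iterate k).quasiMeasurePreserving.ae hg.ae_subadditive

lemma measurableSet_slowSet : MeasurableSet (slowSet g a) := by
  have : slowSet g a = ⋃ b : ℚ, ⋃ (_ : (b : ℝ) < a), ⋂ N : ℕ, ⋃ n : ℕ, ⋃ (_ : N ≤ n),
      {ω | g n ω < b * n} := by
    ext ω
    simp only [slowSet, mem_ofPred_eq, mem_iUnion, mem_iInter, frequently_atTop, exists_prop]
  rw [this]
  exact .iUnion fun b => .iUnion fun _ => .iInter fun N => .iUnion fun n => .iUnion fun _ =>
    measurableSet_lt (hg.measurable n) measurable_const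

lemma preimage_slowSet_ae_le : T ⁻¹' slowSet g a ≤ᵐ[P] slowSet g a := by
  filter_upwards [hg.ae_subadditive] with ω hω
  rintro ⟨b, hb, hfreq⟩
  obtain ⟨b', hbb', hb'⟩ := exists_rat_btwn hb
  have hgap : (0 : ℝ) < b' - b := sub_pos.2 hbb'
  have hlarge : ∀ᶠ n : ℕ in atTop, (g 1 ω - b') / (b' - b) ≤ n :=
    tendsto_natCast_atTop_atTop.eventually_ge_atTop _
  refine ⟨b', hb', (tendsto_add_atTop_nat 1).frequently ?_⟩
  refine (hfreq.and_eventually hlarge).mono fun n ⟨hslow, hn⟩ => ?_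
  have hstep := hω 1 n
  rw [add_comm 1 n, Function.iterate_one] at hstep
  rw [div_le_iff₀ hgap] at hn
  push_cast
  linarith [hslow]

lemma le_add_setIntegral [IsProbabilityMeasure P] (hT : MeasurePreserving T P P)
    (hh : Tendsto (fun n : ℕ => (∫ ω, g n ω ∂P) / n) atTop (𝓝 h)) (hBm : MeasurableSet B)
    (hci : Integrable c P) (hc : ∀ ω, 0 ≤ c ω) (hone : ∀ ω, g 1 ω ≤ a + c ω)
    (hB : ∀ ω ∉ B, ∃ k, 1 ≤ k ∧ k ≤ K ∧ g k ω ≤ a * k) :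
    h ≤ a + ∫ ω in B, c ω ∂P := by
  have hbound (M : ℕ) :
      ∫ ω, g M ω ∂P ≤ a * M + (M * ∫ ω in B, c ω ∂P + K * ∫ ω, c ω ∂P) := by
    have herr := integrable_coveringError (K := K) hT hBm hci M
    calc ∫ ω, g M ω ∂P ≤ ∫ ω, (a * M + coveringError T B c K M ω) ∂P := by
          refine integral_mono_ae (hg.integrable M) ((integrable_const _).add herr) ?_
          filter_upwards [hg.ae_subadditive_iterate hT] with ω hω
          exact le_mul_add_coveringError hc hg.zero hone hB M ω hω
      _ = a * M + (M * ∫ ω in B, c ω ∂P + (min M K : ℕ) * ∫ ω, c ω ∂P) := by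
          rw [integral_add (integrable_const _) herr, integral_coveringError hT hBm hci]
          simp
      _ ≤ a * M + (M * ∫ ω in B, c ω ∂P + K * ∫ ω, c ω ∂P) := by
          have : 0 ≤ ∫ ω, c ω ∂P := integral_nonneg hc
          gcongr
          exact min_le_right _ _
  have hlim : Tendsto (fun M : ℕ => a + ∫ ω in B, c ω ∂P + (K * ∫ ω, c ω ∂P) / M) atTop
      (𝓝 (a + ∫ ω in B, c ω ∂P + 0)) :=
    tendsto_const_nhds.add (tendsto_const_nhds.div_atTop tendsto_natCast_atTop_atTop)
  rw [add_zero] at hlim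
  refine le_of_tendsto_of_tendsto hh hlim ?_
  filter_upwards [eventually_gt_atTop 0] with M hM
  have hM' : (0 : ℝ) < M := by exact_mod_cast hM
  rw [div_le_iff₀ hM', add_mul, add_mul, div_mul_cancel₀ _ hM'.ne']
  linarith [hbound M]

lemma le_of_ae_mem_slowSet [IsProbabilityMeasure P] (hT : MeasurePreserving T P P)
    (hh : Tendsto (fun n : ℕ => (∫ ω, g n ω ∂P) / n) atTop (𝓝 h))
    (hslow : ∀ᵐ ω ∂P, ω ∈ slowSet g a) : h ≤ a := by
  let B (K : ℕ) : Set Ω := {ω | ∀ k, 1 ≤ k → k ≤ K → a * k ≤ g k ω}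
  let c (ω : Ω) : ℝ := |g 1 ω| + |a|
  have hBm (K : ℕ) : MeasurableSet (B K) := by
    have : B K = ⋂ k : ℕ, ⋂ (_ : 1 ≤ k), ⋂ (_ : k ≤ K), {ω | a * k ≤ g k ω} := by
      ext ω; simp [B]
    rw [this]
    exact .iInter fun k => .iInter fun _ => .iInter fun _ =>
      measurableSet_le measurable_const (hg.measurable k)
  have hB_anti : Antitone B := fun K L hKL ω hω k hk hkK => hω k hk (hkK.trans hKL)
  have hci : Integrable c P := (hg.integrable 1).abs.add (integrable_const _)
  have hB_null : P (⋂ K, B K) = 0 := by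
    refine measure_eq_zero_iff_ae_notMem.2 ?_
    filter_upwards [hslow] with ω hω hmem
    obtain ⟨b, hb, hfreq⟩ := hω
    obtain ⟨n, hn, hgn⟩ := frequently_atTop.1 hfreq 1
    have hle : a * n ≤ g n ω := mem_iInter.1 hmem n n hn le_rfl
    exact hgn.not_ge ((mul_le_mul_of_nonneg_right hb.le n.cast_nonneg).trans hle)
  have hlim : Tendsto (fun K => a + ∫ ω in B K, c ω ∂P) atTop (𝓝 (a + 0)) := by
    have := Antitone.tendsto_setIntegral hBm hB_anti hci.integrableOn
    rw [setIntegral_measure_zero _ hB_null] at this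
    exact this.const_add a
  rw [add_zero] at hlim
  refine ge_of_tendsto' hlim fun K => ?_
  refine hg.le_add_setIntegral hT hh (hBm K) hci (fun ω => by positivity) (fun ω => ?_)
    (K := K) fun ω hω => ?_
  · linarith [le_abs_self (g 1 ω), neg_abs_le a]
  · simp only [B, mem_ofPred_eq] at hω
    push Not at hω
    obtain ⟨k, hk, hkK, hlt⟩ := hω
    exact ⟨k, hk, hkK, hlt.le⟩

lemma ae_eventually_mul_le [IsProbabilityMeasure P] (hT : Ergodic T P)
    (hh : Tendsto (fun n : ℕ => (∫ ω, g n ω ∂P) / n) atTop (𝓝 h)) (ha : a < h) :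
    ∀ᵐ ω ∂P, ∀ᶠ n : ℕ in atTop, a * n ≤ g n ω := by
  obtain ⟨a', haa', ha'⟩ := exists_between ha
  obtain ⟨b, hab, hba'⟩ := exists_rat_btwn haa'
  rcases hT.ae_empty_or_univ_of_preimage_ae_le hg.measurableSet_slowSet.nullMeasurableSet
    (hg.preimage_slowSet_ae_le (a := a')) with hempty | huniv
  · filter_upwards [eventuallyEq_empty.1 hempty] with ω hω
    by_contra hnot
    refine hω ⟨b, hba', (not_eventually.1 hnot).mono fun n hn => ?_⟩
    exact (not_le.1 hn).trans_le (mul_le_mul_of_nonneg_right hab.le n.cast_nonneg)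
  · exact absurd (hg.le_of_ae_mem_slowSet hT.toMeasurePreserving hh (eventuallyEq_univ.1 huniv))
      ha'.not_ge

end IsSubadditiveCocycle

lemma ae_tendsto_birkhoffAverage [IsProbabilityMeasure P] (hT : Ergodic T P) (hf : Measurable f)
    (hfi : Integrable f P) :
    ∀ᵐ ω ∂P, Tendsto (fun n => birkhoffAverage ℝ T f n ω) atTop (𝓝 (∫ ω, f ω ∂P)) := by
  have hlower {f : Ω → ℝ} (hf : Measurable f) (hfi : Integrable f P) {a : ℝ}
      (ha : a < ∫ ω, f ω ∂P) :
      ∀ᵐ ω ∂P, ∀ᶠ n : ℕ in atTop, a ≤ birkhoffAverage ℝ T f n ω := by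
    have hmean : Tendsto (fun n : ℕ => (∫ ω, birkhoffSum T f n ω ∂P) / n) atTop
        (𝓝 (∫ ω, f ω ∂P)) := by
      refine tendsto_const_nhds.congr' ?_
      filter_upwards [eventually_ne_atTop 0] with n hn
      have hsum := integral_finsetSum (Finset.range n) fun k _ =>
        (hT.toMeasurePreserving.iterate k).integrable_comp_of_integrable hfi
      simp only [Function.comp_apply, integral_comp_of_measurePreserving
        (hT.toMeasurePreserving.iterate _) hf.aestronglyMeasurable] at hsum
      simp only [birkhoffSum, hsum]
      simp [hn]
    filter_upwards [(isSubadditiveCocycle_birkhoffSum hT.toMeasurePreserving hf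
      hfi).ae_eventually_mul_le hT hmean ha] with ω hω
    filter_upwards [hω, eventually_gt_atTop 0] with n hn hpos
    rw [birkhoffAverage, smul_eq_mul, ← div_eq_inv_mul, le_div_iff₀ (by exact_mod_cast hpos)]
    exact hn
  refine ae_tendsto_of_forall_ae_eventually (fun a => hlower hf hfi) fun b hb => ?_
  filter_upwards [hlower hf.neg hfi.neg (a := -b) (by simpa [integral_neg] using hb)] with ω hω
  filter_upwards [hω] with n hn
  rw [birkhoffAverage_neg] at hn
  exact neg_le_neg_iff.1 hn

lemma tendsto_comp_add_div {u : ℕ → ℝ} {L : ℝ} (hu : Tendsto (fun n : ℕ => u n / n) atTop (𝓝 L))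
    (r : ℕ) : Tendsto (fun n : ℕ => u (n + r) / n) atTop (𝓝 L) := by
  have hratio : Tendsto (fun n : ℕ => ((n + r : ℕ) : ℝ) / n) atTop (𝓝 1) := by
    have := (tendsto_natCast_div_add_atTop (r : ℝ)).inv₀ one_ne_zero
    simpa only [inv_div, inv_one, Nat.cast_add] using this
  have hprod := (hu.comp (tendsto_add_atTop_nat r)).mul hratio
  rw [mul_one] at hprod
  refine hprod.congr' ?_
  filter_upwards [eventually_ne_atTop 0] with n hn
  have hnr : n + r ≠ 0 := by omega
  exact div_mul_div_cancel₀ (Nat.cast_ne_zero.2 hnr)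

lemma ae_tendsto_iterate_div [IsProbabilityMeasure P] (hT : Ergodic T P) (hf : Measurable f)
    (hfi : Integrable f P) : ∀ᵐ ω ∂P, Tendsto (fun n : ℕ => f (T^[n] ω) / n) atTop (𝓝 0) := by
  filter_upwards [ae_tendsto_birkhoffAverage hT hf hfi] with ω hω
  have hsum : Tendsto (fun n : ℕ => birkhoffSum T f n ω / n) atTop (𝓝 (∫ ω, f ω ∂P)) :=
    hω.congr fun n => (div_eq_inv_mul _ _).symm
  have hdiff := (tendsto_comp_add_div hsum 1).sub hsum
  rw [sub_self] at hdiff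
  refine hdiff.congr fun n => ?_
  rw [birkhoffSum_succ]
  ring

namespace IsSubadditiveCocycle

lemma ae_eventually_div_le [IsProbabilityMeasure P] (hg : IsSubadditiveCocycle T P g)
    (hT : Ergodic T P) {M : ℕ} (hM : 0 < M) {b : ℝ} (hb : (∫ ω, g M ω ∂P) / M < b) :
    ∀ᵐ ω ∂P, ∀ᶠ n : ℕ in atTop, g n ω / n ≤ b := by
  have hterms : ∀ᵐ ω ∂P, ∀ m, Tendsto (fun n : ℕ => g m (T^[n] ω) / n) atTop (𝓝 0) :=
    ae_all_iff.2 fun m => ae_tendsto_iterate_div hT (hg.measurable m) (hg.integrable m)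
  filter_upwards [hg.ae_subadditive, hterms, ae_tendsto_birkhoffAverage hT (hg.measurable M)
    (hg.integrable M)] with ω hsub hterm havg
  have hsum : Tendsto (fun n : ℕ => birkhoffSum T (g M) n ω / n) atTop (𝓝 (∫ ω, g M ω ∂P)) :=
    havg.congr fun n => (div_eq_inv_mul _ _).symm
  have hconst : Tendsto (fun n : ℕ => (∑ r ∈ Finset.range M, g r ω) / n) atTop (𝓝 0) :=
    tendsto_const_nhds.div_atTop tendsto_natCast_atTop_atTop
  have htail := tendsto_finsetSum (Finset.range M) fun r _ =>
    tendsto_comp_add_div (hterm (M - r)) r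
  have hratio : Tendsto (fun n : ℕ => (n : ℝ) / (n + M : ℕ)) atTop (𝓝 1) := by
    simpa only [Nat.cast_add] using tendsto_natCast_div_add_atTop (M : ℝ)
  have hlim := ((hconst.add hsum).add htail).mul hratio
  simp only [Finset.sum_const_zero, zero_add, add_zero, mul_one] at hlim
  have hM' : (0 : ℝ) < M := by exact_mod_cast hM
  rw [div_lt_iff₀ hM'] at hb
  have hev : ∀ᶠ n : ℕ in atTop, g (n + M) ω / (n + M : ℕ) ≤ b := by
    filter_upwards [hlim.eventually_lt_const hb, eventually_gt_atTop 0] with n hn hpos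
    have hn' : (0 : ℝ) < n := by exact_mod_cast hpos
    have hnM : (0 : ℝ) < (n + M : ℕ) := by exact_mod_cast (by omega : 0 < n + M)
    rw [← Finset.sum_div, ← add_div, ← add_div, div_mul_div_cancel₀ hn'.ne',
      div_lt_iff₀ hnM] at hn
    rw [div_le_iff₀ hnM, ← mul_le_mul_iff_right₀ hM']
    linarith [mul_le_add_birkhoffSum hsub M n]
  exact by rwa [← map_add_atTop_eq_nat M, eventually_map]

/-- **Kingman's subadditive ergodic theorem**. -/
theorem ae_tendsto_div [IsProbabilityMeasure P] (hg : IsSubadditiveCocycle T P g)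
    (hT : Ergodic T P) (hh : Tendsto (fun n : ℕ => (∫ ω, g n ω ∂P) / n) atTop (𝓝 h)) :
    ∀ᵐ ω ∂P, Tendsto (fun n : ℕ => g n ω / n) atTop (𝓝 h) := by
  refine ae_tendsto_of_forall_ae_eventually (fun a ha => ?_) fun b hb => ?_
  · filter_upwards [hg.ae_eventually_mul_le hT hh ha] with ω hω
    filter_upwards [hω, eventually_gt_atTop 0] with n hn hpos
    rwa [le_div_iff₀ (by exact_mod_cast hpos)]
  · obtain ⟨M, hMb, hM⟩ := ((hh.eventually_lt_const hb).and (eventually_gt_atTop 0)).exists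
    exact hg.ae_eventually_div_le hT hM hMb

end IsSubadditiveCocycle

end Ergodic

/-! ### The path space of a random walk -/

section Paths

variable {G : Type*}

/-- The shift on sequences of increments. -/
def pathShift (ω : ℕ → G) : ℕ → G := fun n => ω (n + 1)

/-- The path with first increment `g`, followed by the increments of `ω`. -/
def pathCons (g : G) (ω : ℕ → G) : ℕ → G
  | 0 => g
  | n + 1 => ω n

lemma pathShift_iterate_apply (n : ℕ) (ω : ℕ → G) (k : ℕ) : (pathShift^[n] ω) k = ω (k + n) := by
  induction n generalizing ω with
  | zero => rfl
  | succ n ih =>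
    rw [Function.iterate_succ_apply, ih, ← add_assoc]
    rfl

lemma isPiSystem_cylinders :
    IsPiSystem {s | ∃ (g : ℕ → G) (n : ℕ), s = PiNat.cylinder g n} := by
  rintro s ⟨g, n, rfl⟩ t ⟨h, m, rfl⟩ ⟨ω, hωg, hωh⟩
  refine ⟨ω, max n m, ?_⟩
  ext ω'
  simp only [mem_inter_iff, PiNat.mem_cylinder_iff, lt_max_iff] at *
  constructor
  · rintro ⟨h₁, h₂⟩ i (hi | hi)
    · rw [h₁ i hi, hωg i hi]
    · rw [h₂ i hi, hωh i hi]
  · exact fun h' => ⟨fun i hi => (h' i (.inl hi)).trans (hωg i hi),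
      fun i hi => (h' i (.inr hi)).trans (hωh i hi)⟩

variable [MeasurableSpace G]

lemma measurable_pathShift : Measurable (pathShift (G := G)) :=
  measurable_pi_lambda _ fun n => measurable_pi_apply (n + 1)

lemma measurable_pathCons (g : G) : Measurable (pathCons g) := by
  refine measurable_pi_lambda _ fun n => ?_
  cases n with
  | zero => exact measurable_const
  | succ n => exact measurable_pi_apply n

variable [DiscreteMeasurableSpace G]

lemma measurableSet_cylinder (g : ℕ → G) (n : ℕ) :
    MeasurableSet (PiNat.cylinder (E := fun _ => G) g n) := by
  have : PiNat.cylinder (E := fun _ => G) g n = ⋂ i ∈ Iio n, (fun ω => ω i) ⁻¹' {g i} := by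
    ext ω; simp [PiNat.mem_cylinder_iff]
  rw [this]
  exact .biInter (to_countable _) fun i _ => measurable_pi_apply i (.singleton (g i))

lemma generateFrom_cylinders [Countable G] :
    (MeasurableSpace.pi : MeasurableSpace (ℕ → G)) =
      MeasurableSpace.generateFrom {s | ∃ (g : ℕ → G) (n : ℕ), s = PiNat.cylinder g n} := by
  let _ : TopologicalSpace G := ⊥
  have : DiscreteTopology G := ⟨rfl⟩
  have : BorelSpace G := ⟨by
    rw [borel_eq_top_of_discrete]
    exact eq_top_iff.2 fun s _ => .of_discrete⟩
  rw [BorelSpace.measurable_eq (α := ℕ → G),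
    (PiNat.isTopologicalBasis_cylinders (E := fun _ => G)).borel_eq_generateFrom]

lemma measurableSet_apply_zero_and_pathShift_mem (g : G) {A : Set (ℕ → G)}
    (hA : MeasurableSet A) : MeasurableSet {ω : ℕ → G | ω 0 = g ∧ pathShift ω ∈ A} :=
  MeasurableSet.inter (s₁ := (fun ω : ℕ → G => ω 0) ⁻¹' {g})
    (measurable_pi_apply 0 (.singleton g)) (measurable_pathShift hA)

end Paths

section Walk

variable {G : Type*} [Group G]

lemma walk_zero (ω : ℕ → G) : walk ω 0 = 1 := by simp [walk]

lemma walk_succ (ω : ℕ → G) (n : ℕ) : walk ω (n + 1) = walk ω n * ω n := by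
  simp [walk, List.range_succ]

lemma walk_one (ω : ℕ → G) : walk ω 1 = ω 0 := by simp [walk]

lemma walk_add (ω : ℕ → G) (n m : ℕ) :
    walk ω (n + m) = walk ω n * walk (pathShift^[n] ω) m := by
  induction m with
  | zero => simp [walk_zero]
  | succ m ih =>
    rw [← add_assoc, walk_succ, ih, walk_succ, pathShift_iterate_apply, mul_assoc, add_comm m n]

lemma walk_pathCons (g : G) (ω : ℕ → G) (n : ℕ) :
    walk (pathCons g ω) (n + 1) = g * walk ω n := by
  rw [add_comm, walk_add, walk_one]
  rfl

variable [Countable G] [MeasurableSpace G] [DiscreteMeasurableSpace G]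

lemma measurable_walk (n : ℕ) : Measurable fun ω : ℕ → G => walk ω n := by
  induction n with
  | zero => simpa only [walk_zero] using measurable_const
  | succ n ih =>
    simp only [walk_succ]
    exact (measurable_of_countable fun z : G × G => z.1 * z.2).comp
      (ih.prodMk (measurable_pi_apply n))

lemma measurableSet_walk_eq (n : ℕ) (x : G) : MeasurableSet {ω : ℕ → G | walk ω n = x} :=
  measurable_walk n (.singleton x)

end Walk

namespace IsRWMeasure

variable {G : Type*} [Group G] [MeasurableSpace G] {p : G → ℝ≥0∞} {P : Measure (ℕ → G)}

lemma measure_cylinder (hP : IsRWMeasure p P) (g : ℕ → G) (n : ℕ) :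
    P (PiNat.cylinder (E := fun _ => G) g n) = ∏ i ∈ Finset.range n, p (g i) :=
  hP.2 n g

variable [Countable G] [DiscreteMeasurableSpace G] (hP : IsRWMeasure p P)
include hP

lemma tsum_eq_one : ∑' g, p g = 1 := by
  have := hP.1
  have hfirst (g : G) : P ((fun ω : ℕ → G => ω 0) ⁻¹' {g}) = p g := by
    have hcyl : (fun ω : ℕ → G => ω 0) ⁻¹' {g} = PiNat.cylinder (fun _ => g) 1 := by
      ext ω; simp [PiNat.mem_cylinder_iff]
    rw [hcyl, hP.measure_cylinder, Finset.prod_range_one]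
  have hsum := tsum_measure_preimage_singleton (μ := P) (countable_univ (α := G))
    fun g _ => measurable_pi_apply 0 (.singleton g)
  rw [tsum_univ fun g => P ((fun ω : ℕ → G => ω 0) ⁻¹' {g}), preimage_univ, measure_univ] at hsum
  simpa only [hfirst] using hsum

lemma eq_sum_smul_map_pathCons : P = Measure.sum fun g => p g • P.map (pathCons g) := by
  have := hP.1
  have hsum_apply {s : Set (ℕ → G)} (hs : MeasurableSet s) :
      Measure.sum (fun g => p g • P.map (pathCons g)) s = ∑' g, p g * P (pathCons g ⁻¹' s) := by
    simp only [Measure.sum_apply _ hs, Measure.smul_apply, smul_eq_mul,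
      Measure.map_apply (measurable_pathCons _) hs]
  refine ext_of_generate_finite _ generateFrom_cylinders isPiSystem_cylinders ?_ ?_
  · rintro s ⟨h, n, rfl⟩
    rw [hsum_apply (measurableSet_cylinder h n), hP.measure_cylinder]
    cases n with
    | zero => simp [hP.tsum_eq_one]
    | succ n =>
      have hsame : pathCons (h 0) ⁻¹' PiNat.cylinder h (n + 1) =
          PiNat.cylinder (fun i => h (i + 1)) n := by
        ext ω
        refine ⟨fun h' i hi => h' (i + 1) (by omega), fun h' i hi => ?_⟩
        cases i with
        | zero => rfl
        | succ i => exact h' i (by omega)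
      have hother (g : G) (hg : g ≠ h 0) : pathCons g ⁻¹' PiNat.cylinder h (n + 1) = ∅ :=
        eq_empty_of_forall_notMem fun ω h' => hg (h' 0 (by omega))
      rw [tsum_eq_single (h 0) fun g hg => by rw [hother g hg, measure_empty, mul_zero], hsame,
        hP.measure_cylinder, Finset.prod_range_succ', mul_comm]
  · simp [hsum_apply .univ, hP.tsum_eq_one]

lemma lintegral_eq_tsum {F : (ℕ → G) → ℝ≥0∞} (hF : Measurable F) :
    ∫⁻ ω, F ω ∂P = ∑' g, p g * ∫⁻ ω, F (pathCons g ω) ∂P := by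
  conv_lhs => rw [hP.eq_sum_smul_map_pathCons]
  simp only [lintegral_sum_measure, lintegral_smul_measure,
    lintegral_map hF (measurable_pathCons _), smul_eq_mul]

lemma measure_eq_tsum {A : Set (ℕ → G)} (hA : MeasurableSet A) :
    P A = ∑' g, p g * P (pathCons g ⁻¹' A) := by
  conv_lhs => rw [hP.eq_sum_smul_map_pathCons]
  simp only [Measure.sum_apply _ hA, Measure.smul_apply, smul_eq_mul,
    Measure.map_apply (measurable_pathCons _) hA]

lemma measure_apply_zero_and_pathShift_mem (g : G) {A : Set (ℕ → G)} (hA : MeasurableSet A) :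
    P {ω | ω 0 = g ∧ pathShift ω ∈ A} = p g * P A := by
  have hother (g' : G) (hg' : g' ≠ g) :
      pathCons g' ⁻¹' {ω : ℕ → G | ω 0 = g ∧ pathShift ω ∈ A} = ∅ :=
    eq_empty_of_forall_notMem fun ω hω => hg' hω.1
  have hsame : pathCons g ⁻¹' {ω : ℕ → G | ω 0 = g ∧ pathShift ω ∈ A} = A := by
    ext ω
    exact and_iff_right rfl
  rw [hP.measure_eq_tsum (measurableSet_apply_zero_and_pathShift_mem g hA),
    tsum_eq_single g fun g' hg' => by rw [hother g' hg', measure_empty, mul_zero], hsame]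

lemma measurePreserving_pathShift : MeasurePreserving pathShift P P := by
  refine ⟨measurable_pathShift, Measure.ext fun A hA => ?_⟩
  have hcons (g : G) : pathCons g ⁻¹' (pathShift ⁻¹' A) = A := rfl
  rw [Measure.map_apply measurable_pathShift hA, hP.measure_eq_tsum (measurable_pathShift hA)]
  simp only [hcons, ENNReal.tsum_mul_right, hP.tsum_eq_one, one_mul]

lemma measure_cylinder_inter {A : Set (ℕ → G)} (hA : MeasurableSet A) (n : ℕ) (g : ℕ → G) :
    P (PiNat.cylinder g n ∩ pathShift^[n] ⁻¹' A) = P (PiNat.cylinder g n) * P A := by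
  have := hP.1
  induction n generalizing g with
  | zero => simp
  | succ n ih =>
    have hfirst : PiNat.cylinder g (n + 1) ∩ pathShift^[n + 1] ⁻¹' A =
        {ω | ω 0 = g 0 ∧ pathShift ω ∈
          PiNat.cylinder (fun i => g (i + 1)) n ∩ pathShift^[n] ⁻¹' A} := by
      ext ω
      refine ⟨fun ⟨h₁, h₂⟩ => ⟨h₁ 0 (by omega), fun i hi => h₁ (i + 1) (by omega), h₂⟩,
        fun ⟨h₀, h₁, h₂⟩ => ⟨fun i hi => ?_, h₂⟩⟩
      cases i with
      | zero => exact h₀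
      | succ i => exact h₁ i (by omega)
    rw [hfirst, hP.measure_apply_zero_and_pathShift_mem _
      ((measurableSet_cylinder _ _).inter ((measurable_pathShift.iterate n) hA)), ih,
      hP.measure_cylinder, hP.measure_cylinder, Finset.prod_range_succ', mul_comm _ (p (g 0)),
      mul_assoc]

lemma ergodic_pathShift : Ergodic pathShift P := by
  have := hP.1
  refine ⟨hP.measurePreserving_pathShift, ⟨fun A hA hinv => ?_⟩⟩
  have hindep : P.restrict A = P A • P := by
    refine ext_of_generate_finite _ generateFrom_cylinders isPiSystem_cylinders ?_ (by simp)
    rintro s ⟨g, n, rfl⟩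
    have hinv_iterate : pathShift^[n] ⁻¹' A = A := by
      rw [preimage_iterate_eq]
      exact Function.iterate_fixed hinv n
    have := hP.measure_cylinder_inter hA n g
    rw [hinv_iterate] at this
    rw [Measure.restrict_apply (measurableSet_cylinder g n), this, Measure.smul_apply,
      smul_eq_mul, mul_comm]
  have hself : ProbabilityTheory.IndepSet A A P := by
    rw [ProbabilityTheory.indepSet_iff_measure_inter_eq_mul hA hA P, ← Measure.restrict_apply hA,
      hindep, Measure.smul_apply, smul_eq_mul]
  refine eventuallyConst_set'.2 ?_
  rcases ProbabilityTheory.measure_eq_zero_or_one_of_indepSet_self hself with h | h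
  · exact .inl (ae_eq_empty.2 h)
  · exact .inr (ae_eq_univ.2 ((prob_compl_eq_zero_iff hA).2 h))

lemma measure_walk_eq_and_iterate_mem (n : ℕ) (x : G) {A : Set (ℕ → G)} (hA : MeasurableSet A) :
    P {ω | walk ω n = x ∧ pathShift^[n] ω ∈ A} = piN p n x * P A := by
  induction n generalizing x A with
  | zero =>
    by_cases hx : x = 1
    · simp [walk_zero, piN, hx]
    · simp [walk_zero, piN, hx, Ne.symm hx]
  | succ n ih =>
    have hunion : {ω : ℕ → G | walk ω (n + 1) = x ∧ pathShift^[n + 1] ω ∈ A} =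
        ⋃ y, {ω | walk ω n = y ∧
          pathShift^[n] ω ∈ {ω' : ℕ → G | ω' 0 = y⁻¹ * x ∧ pathShift ω' ∈ A}} := by
      ext ω
      simp only [mem_iUnion, mem_ofPred_eq, pathShift_iterate_apply, zero_add, walk_succ,
        Function.iterate_succ_apply', eq_inv_mul_iff_mul_eq, exists_eq_left']
    have hmeas (y : G) := measurableSet_apply_zero_and_pathShift_mem (y⁻¹ * x) hA
    have hdisj : Pairwise (Function.onFun Disjoint fun y => {ω : ℕ → G | walk ω n = y ∧
        pathShift^[n] ω ∈ {ω' : ℕ → G | ω' 0 = y⁻¹ * x ∧ pathShift ω' ∈ A}}) :=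
      fun y z hyz => Set.disjoint_left.2 fun ω hy hz => hyz (hy.1.symm.trans hz.1)
    rw [hunion, measure_iUnion hdisj fun y =>
      (measurableSet_walk_eq n y).inter ((measurable_pathShift.iterate n) (hmeas y))]
    simp only [ih _ (hmeas _), hP.measure_apply_zero_and_pathShift_mem _ hA, piN, conv,
      ← ENNReal.tsum_mul_right, mul_assoc]

lemma measure_walk_eq (n : ℕ) (x : G) : P {ω | walk ω n = x} = piN p n x := by
  have := hP.1
  simpa using hP.measure_walk_eq_and_iterate_mem n x .univ

lemma piN_succ' (n : ℕ) (x : G) : piN p (n + 1) x = ∑' g, p g * piN p n (g⁻¹ * x) := by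
  rw [← hP.measure_walk_eq, hP.measure_eq_tsum (measurableSet_walk_eq (n + 1) x)]
  simp only [← hP.measure_walk_eq, preimage_ofPred_eq, walk_pathCons, eq_inv_mul_iff_mul_eq]

lemma piN_one (x : G) : piN p 1 x = p x := by
  rw [← zero_add 1, hP.piN_succ', tsum_eq_single x fun g hg => ?_]
  · simp [piN]
  · simp [piN, inv_mul_eq_one, hg]

lemma piN_le_one (n : ℕ) (x : G) : piN p n x ≤ 1 := by
  have := hP.1
  exact hP.measure_walk_eq n x ▸ prob_le_one

lemma piN_ne_top (n : ℕ) (x : G) : piN p n x ≠ ∞ :=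
  ne_top_of_le_ne_top ENNReal.one_ne_top (hP.piN_le_one n x)

lemma piN_mul_piN_le (n m : ℕ) (x y : G) : piN p n x * piN p m y ≤ piN p (n + m) (x * y) := by
  rw [← hP.measure_walk_eq m y,
    ← hP.measure_walk_eq_and_iterate_mem n x (measurableSet_walk_eq m y), ← hP.measure_walk_eq]
  refine measure_mono fun ω ⟨hx, hy⟩ => ?_
  rw [mem_ofPred_eq, walk_add, hx, hy]

lemma ae_piN_walk_ne_zero : ∀ᵐ ω ∂P, ∀ n, piN p n (walk ω n) ≠ 0 := by
  refine ae_all_iff.2 fun n => ?_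
  have hnull : P (⋃ x : {x : G // piN p n x = 0}, {ω : ℕ → G | walk ω n = x}) = 0 :=
    measure_iUnion_null fun x => (hP.measure_walk_eq n x).trans x.2
  filter_upwards [measure_eq_zero_iff_ae_notMem.1 hnull] with ω hω h0
  exact hω (mem_iUnion.2 ⟨⟨walk ω n, h0⟩, rfl⟩)

lemma hasSum_integral_comp_walk (n : ℕ) {φ : G → ℝ}
    (hφ : Integrable (fun ω => φ (walk ω n)) P) :
    HasSum (fun x => (piN p n x).toReal * φ x) (∫ ω, φ (walk ω n) ∂P) := by
  have := hP.1
  have hwalk := measurable_walk (G := G) n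
  have hφm := (measurable_of_countable φ).aestronglyMeasurable (μ := P.map fun ω => walk ω n)
  have hφ' : Integrable φ (P.map fun ω => walk ω n) :=
    (integrable_map_measure hφm hwalk.aemeasurable).2 hφ
  have hval (x : G) : (P.map fun ω => walk ω n) {x} = piN p n x := by
    rw [Measure.map_apply hwalk (.singleton x), ← hP.measure_walk_eq]
    rfl
  have hsum := hasSum_integral_measure (f := φ)
    (μ := fun x => (P.map fun ω => walk ω n) {x} • Measure.dirac x)
    (by rwa [Measure.sum_smul_dirac])
  rw [Measure.sum_smul_dirac, integral_map hwalk.aemeasurable hφm] at hsum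
  simpa only [integral_smul_measure, integral_dirac, hval, smul_eq_mul] using hsum

end IsRWMeasure

/-! ### Growth and entropy -/

section Growth

variable {G : Type*} {f : G → ℝ} {p : G → ℝ≥0∞}

lemma exists_tsum_exp_neg_ne_top (hf : ∀ x, 0 ≤ f x) (hgrow : FinExpGrowth f) :
    ∃ A : ℝ, 0 ≤ A ∧ ∑' x, ENNReal.ofReal (Real.exp (-(A * f x))) ≠ ∞ := by
  obtain ⟨c, hc, hcount⟩ := hgrow
  set e : ℕ → ℝ≥0∞ := fun k => ENNReal.ofReal (Real.exp (-((c + 1) * k)))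
  have hlayer (x : G) : ENNReal.ofReal (Real.exp (-((c + 1) * f x))) ≤
      ∑' k : ℕ, {x | f x < (k : ℝ) + 1}.indicator (fun _ => e k) x := by
    have hmem : x ∈ {y | f y < (⌊f x⌋₊ : ℝ) + 1} := Nat.lt_floor_add_one (f x)
    refine le_trans ?_ ((indicator_of_mem hmem _).ge.trans (ENNReal.le_tsum ⌊f x⌋₊))
    refine ENNReal.ofReal_le_ofReal (Real.exp_le_exp.2 (neg_le_neg ?_))
    exact mul_le_mul_of_nonneg_left (Nat.floor_le (hf x)) (by positivity)
  have hcard (k : ℕ) : ∑' x, {x | f x < (k : ℝ) + 1}.indicator (fun _ => e k) x ≤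
      ENNReal.ofReal (c * Real.exp c) * ENNReal.ofReal (Real.exp (-1)) ^ k := by
    obtain ⟨hfin, hle⟩ := hcount (k + 1) (by positivity)
    rw [← tsum_subtype, ENNReal.tsum_set_const, ← hfin.cast_ncard_eq, ENat.toENNReal_coe,
      ← ENNReal.ofReal_natCast, ← ENNReal.ofReal_mul (Nat.cast_nonneg _),
      ← ENNReal.ofReal_pow (Real.exp_pos _).le, ← ENNReal.ofReal_mul (by positivity)]
    refine ENNReal.ofReal_le_ofReal ?_
    calc _ ≤ c * Real.exp (c * (k + 1)) * Real.exp (-((c + 1) * k)) := by gcongr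
      _ = c * Real.exp c * Real.exp (-1) ^ k := by
        rw [← Real.exp_nat_mul, mul_assoc, mul_assoc, ← Real.exp_add, ← Real.exp_add]
        ring_nf
  refine ⟨c + 1, by positivity, ne_top_of_le_ne_top ?_ (ENNReal.tsum_le_tsum hlayer)⟩
  rw [ENNReal.tsum_comm]
  refine ne_top_of_le_ne_top ?_ (ENNReal.tsum_le_tsum hcard)
  rw [ENNReal.tsum_mul_left, ENNReal.tsum_geometric]
  refine ENNReal.mul_ne_top ENNReal.ofReal_ne_top (ENNReal.inv_ne_top.2 (tsub_pos_of_lt ?_).ne')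
  simp

lemma mul_neg_log_le_mul_add_exp_neg {q : ℝ} (hq : 0 ≤ q) (s : ℝ) :
    q * -Real.log q ≤ q * s + Real.exp (-s) := by
  rcases hq.eq_or_lt with rfl | hq
  · simpa using (Real.exp_pos _).le
  have hlog := Real.log_le_sub_one_of_pos (div_pos (Real.exp_pos (-s)) hq)
  rw [Real.log_div (Real.exp_pos _).ne' hq.ne', Real.log_exp] at hlog
  have hmul := mul_le_mul_of_nonneg_left hlog hq.le
  rw [mul_sub q (_ / q), mul_div_cancel₀ _ hq.ne'] at hmul
  linarith

lemma finiteFirstMoment_neg_log (hp : ∀ x, p x ≠ ∞) (hf : ∀ x, 0 ≤ f x)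
    (hmom : FiniteFirstMoment p f) (hgrow : FinExpGrowth f) :
    FiniteFirstMoment p fun x => -Real.log (p x).toReal := by
  obtain ⟨A, hA, hexp⟩ := exists_tsum_exp_neg_ne_top hf hgrow
  have hle (x : G) : p x * ENNReal.ofReal (-Real.log (p x).toReal) ≤
      ENNReal.ofReal A * (p x * ENNReal.ofReal (f x)) +
        ENNReal.ofReal (Real.exp (-(A * f x))) := by
    have hx := ENNReal.ofReal_toReal (hp x)
    have hx0 : 0 ≤ (p x).toReal := ENNReal.toReal_nonneg
    have hAf := mul_nonneg hA (hf x)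
    rw [mul_left_comm, ← ENNReal.ofReal_mul hA]
    nth_rw 1 3 [← hx]
    rw [← ENNReal.ofReal_mul hx0, ← ENNReal.ofReal_mul hx0,
      ← ENNReal.ofReal_add (mul_nonneg hx0 hAf) (Real.exp_pos _).le]
    exact ENNReal.ofReal_le_ofReal (mul_neg_log_le_mul_add_exp_neg hx0 _)
  refine ne_top_of_le_ne_top ?_ (ENNReal.tsum_le_tsum hle)
  rw [ENNReal.tsum_add, ENNReal.tsum_mul_left]
  exact ENNReal.add_ne_top.2 ⟨ENNReal.mul_ne_top ENNReal.ofReal_ne_top hmom, hexp⟩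

end Growth

namespace IsRWMeasure

variable {G : Type*} [Group G] [Countable G] [MeasurableSpace G] [DiscreteMeasurableSpace G]
  {p : G → ℝ≥0∞} {P : Measure (ℕ → G)} (hP : IsRWMeasure p P)
include hP

lemma integrable_comp_apply_zero {φ : G → ℝ} (hφ0 : ∀ g, 0 ≤ φ g)
    (hφ : FiniteFirstMoment p φ) : Integrable (fun ω : ℕ → G => φ (ω 0)) P := by
  have := hP.1
  have hmeas : Measurable fun ω : ℕ → G => φ (ω 0) :=
    (measurable_of_countable φ).comp (measurable_pi_apply 0)
  refine ⟨hmeas.aestronglyMeasurable, ?_⟩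
  rw [HasFiniteIntegral, hP.lintegral_eq_tsum hmeas.enorm]
  have hcons (g : G) : ∫⁻ ω, ‖φ (pathCons g ω 0)‖ₑ ∂P = ENNReal.ofReal (φ g) := by
    simp [pathCons, Real.enorm_eq_ofReal (hφ0 g)]
  simpa only [hcons] using lt_top_iff_ne_top.2 hφ

lemma ae_tendsto_apply_div {φ : G → ℝ} (hφ0 : ∀ g, 0 ≤ φ g) (hφ : FiniteFirstMoment p φ) :
    ∀ᵐ ω ∂P, Tendsto (fun n : ℕ => φ (ω n) / n) atTop (𝓝 0) := by
  have := hP.1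
  have hmeas : Measurable fun ω : ℕ → G => φ (ω 0) :=
    (measurable_of_countable φ).comp (measurable_pi_apply 0)
  simpa only [pathShift_iterate_apply, zero_add] using
    ae_tendsto_iterate_div hP.ergodic_pathShift hmeas (hP.integrable_comp_apply_zero hφ0 hφ)

section Drift

variable {f : GroupSeminorm G} (hf : FiniteFirstMoment p f)
include hf

lemma isSubadditiveCocycle_comp_walk :
    IsSubadditiveCocycle pathShift P fun n ω => f (walk ω n) := by
  refine .of_integrable_one hP.measurePreserving_pathShift
    (fun n => (measurable_of_countable f).comp (measurable_walk n)) ?_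
    (fun ω => by rw [walk_zero, map_one_eq_zero]) (fun _ _ => apply_nonneg f _)
    (.of_forall fun ω n m => ?_)
  · simpa only [walk_one] using hP.integrable_comp_apply_zero (fun g => apply_nonneg f g) hf
  · rw [walk_add]
    exact map_mul_le_add f _ _

lemma integral_comp_walk_eq_momentSeq (n : ℕ) : ∫ ω, f (walk ω n) ∂P = momentSeq p f n :=
  (hP.hasSum_integral_comp_walk n
    ((hP.isSubadditiveCocycle_comp_walk hf).integrable n)).tsum_eq.symm

lemma ae_tendsto_comp_walk_div {l : ℝ} (hl : HasDrift p f l) :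
    ∀ᵐ ω ∂P, Tendsto (fun n : ℕ => f (walk ω n) / n) atTop (𝓝 l) := by
  have := hP.1
  refine (hP.isSubadditiveCocycle_comp_walk hf).ae_tendsto_div hP.ergodic_pathShift ?_
  simpa only [hP.integral_comp_walk_eq_momentSeq hf, HasDrift] using hl

lemma exists_hasDrift : ∃ l, HasDrift p f l := by
  have hcocycle := hP.isSubadditiveCocycle_comp_walk hf
  have hshift (n : ℕ) := hP.measurePreserving_pathShift.iterate n
  have hsub : Subadditive (momentSeq p f) := fun n m => by
    have hint : Integrable (fun ω => f (walk (pathShift^[n] ω) m)) P :=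
      (hshift n).integrable_comp_of_integrable (hcocycle.integrable m)
    simp only [← hP.integral_comp_walk_eq_momentSeq hf]
    rw [← integral_comp_of_measurePreserving (hshift n)
      (hcocycle.measurable m).aestronglyMeasurable, ← integral_add (hcocycle.integrable n) hint]
    exact integral_mono_ae (hcocycle.integrable _) ((hcocycle.integrable n).add hint)
      (hcocycle.ae_subadditive.mono fun ω h => h n m)
  refine ⟨hsub.lim, hsub.tendsto_lim ⟨0, ?_⟩⟩
  rintro _ ⟨n, rfl⟩
  simp only [← hP.integral_comp_walk_eq_momentSeq hf]
  exact div_nonneg (integral_nonneg fun ω => apply_nonneg f _) n.cast_nonneg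

end Drift

section Entropy

lemma neg_log_piN_nonneg (n : ℕ) (x : G) : 0 ≤ -Real.log (piN p n x).toReal :=
  neg_nonneg.2 (Real.log_nonpos ENNReal.toReal_nonneg
    (ENNReal.toReal_le_of_le_ofReal zero_le_one (by simpa using hP.piN_le_one n x)))

lemma neg_log_piN_mul_le {n m : ℕ} {x y : G} (hx : piN p n x ≠ 0) (hy : piN p m y ≠ 0) :
    -Real.log (piN p (n + m) (x * y)).toReal ≤
      -Real.log (piN p n x).toReal + -Real.log (piN p m y).toReal := by
  have hx' := ENNReal.toReal_pos hx (hP.piN_ne_top n x)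
  have hy' := ENNReal.toReal_pos hy (hP.piN_ne_top m y)
  have hle := ENNReal.toReal_mono (hP.piN_ne_top _ _) (hP.piN_mul_piN_le n m x y)
  rw [ENNReal.toReal_mul] at hle
  rw [← neg_add, ← Real.log_mul hx'.ne' hy'.ne', neg_le_neg_iff]
  exact Real.log_le_log (mul_pos hx' hy') hle

variable (hH : FiniteFirstMoment p fun x => -Real.log (p x).toReal)
include hH

lemma isSubadditiveCocycle_neg_log_piN :
    IsSubadditiveCocycle pathShift P fun n ω => -Real.log (piN p n (walk ω n)).toReal := by
  have hshift (n : ℕ) := hP.measurePreserving_pathShift.iterate n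
  refine .of_integrable_one hP.measurePreserving_pathShift
    (fun n => (measurable_of_countable fun x => -Real.log (piN p n x).toReal).comp
      (measurable_walk n)) ?_ (fun ω => by simp [walk_zero, piN])
    (fun _ _ => hP.neg_log_piN_nonneg _ _) ?_
  · simpa only [walk_one, hP.piN_one] using hP.integrable_comp_apply_zero
      (fun g => by simpa only [hP.piN_one] using hP.neg_log_piN_nonneg 1 g) hH
  · have hne : ∀ᵐ ω ∂P, ∀ n m, piN p m (walk (pathShift^[n] ω) m) ≠ 0 :=
      ae_all_iff.2 fun n => (hshift n).quasiMeasurePreserving.ae hP.ae_piN_walk_ne_zero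
    filter_upwards [hne] with ω hω n m
    rw [walk_add]
    exact hP.neg_log_piN_mul_le (hω 0 n) (hω n m)

lemma integral_neg_log_piN_walk_eq_entropySeq (n : ℕ) :
    ∫ ω, -Real.log (piN p n (walk ω n)).toReal ∂P = entropySeq p n := by
  refine (hP.hasSum_integral_comp_walk n (φ := fun x => -Real.log (piN p n x).toReal)
    ((hP.isSubadditiveCocycle_neg_log_piN hH).integrable n)).tsum_eq.symm.trans
    (tsum_congr fun x => ?_)
  rw [Real.negMulLog, neg_mul_comm]

lemma ae_tendsto_neg_log_piN_walk_div {h : ℝ} (hh : HasEntropy p h) :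
    ∀ᵐ ω ∂P, Tendsto (fun n : ℕ => -Real.log (piN p n (walk ω n)).toReal / n) atTop (𝓝 h) := by
  have := hP.1
  refine (hP.isSubadditiveCocycle_neg_log_piN hH).ae_tendsto_div hP.ergodic_pathShift ?_
  simpa only [hP.integral_neg_log_piN_walk_eq_entropySeq hH, HasEntropy] using hh

end Entropy

end IsRWMeasure

/-! ### The Radon–Nikodym cocycle -/

section RadonNikodym

variable {B : Type*} [MeasurableSpace B] {μ ν : Measure B} [SigmaFinite μ] [IsProbabilityMeasure ν]

lemma lintegral_mul_inv_rnDeriv_le (hμν : μ ≪ ν) {ψ : B → ℝ≥0∞} (hψ : Measurable ψ) :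
    ∫⁻ η, ψ η * (μ.rnDeriv ν η)⁻¹ ∂μ ≤ ∫⁻ η, ψ η ∂ν := by
  rw [← lintegral_rnDeriv_mul hμν (f := fun η => ψ η * (μ.rnDeriv ν η)⁻¹)
    (hψ.mul (Measure.measurable_rnDeriv μ ν).inv).aemeasurable]
  refine lintegral_mono fun η => ?_
  rw [mul_left_comm]
  exact mul_le_of_le_one_right' (ENNReal.mul_inv_le_one _)

lemma lintegral_ofReal_neg_llr_le_one (hμν : μ ≪ ν) :
    ∫⁻ η, ENNReal.ofReal (-llr μ ν η) ∂μ ≤ 1 := by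
  rw [← lintegral_rnDeriv_mul hμν (f := fun η => ENNReal.ofReal (-llr μ ν η))
    (measurable_llr μ ν).neg.ennreal_ofReal.aemeasurable]
  calc _ ≤ ∫⁻ _, 1 ∂ν := lintegral_mono_ae ?_
    _ = 1 := by simp
  filter_upwards [Measure.rnDeriv_ne_top μ ν] with η hη
  conv_lhs => enter [1]; rw [← ENNReal.ofReal_toReal hη]
  rw [← ENNReal.ofReal_mul ENNReal.toReal_nonneg, ENNReal.ofReal_le_one]
  simpa [llr] using mul_neg_log_le_mul_add_exp_neg (ENNReal.toReal_nonneg (a := μ.rnDeriv ν η)) 0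

end RadonNikodym

section PathCons

variable {G : Type*} [Countable G] [MeasurableSpace G] [DiscreteMeasurableSpace G]

lemma measurableEmbedding_pathCons (g : G) : MeasurableEmbedding (pathCons g) := by
  refine .of_measurable_inverse (measurable_pathCons g) ?_ measurable_pathShift fun _ => rfl
  have hrange : range (pathCons g) = (fun ω : ℕ → G => ω 0) ⁻¹' {g} := by
    refine Subset.antisymm (range_subset_iff.2 fun _ => rfl) fun ω hω => ⟨pathShift ω, ?_⟩
    ext (_ | n)
    exacts [hω.symm, rfl]
  rw [hrange]
  exact measurable_pi_apply 0 (measurableSet_singleton g)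

variable {C B : Type*} [MeasurableSpace C] [MeasurableSpace B] {b : (ℕ → G) → B}

lemma measurable_uncurry_apply_zero (hb : Measurable b) {Φ : G → B → C}
    (hΦ : ∀ g, Measurable (Φ g)) : Measurable fun ω : ℕ → G => Φ (ω 0) (b ω) := by
  have huncurry : Measurable (Function.uncurry Φ) := measurable_from_prod_countable_right hΦ
  exact huncurry.comp ((measurable_pi_apply 0).prodMk hb)

end PathCons

namespace IsRWMeasure

variable {G : Type*} [Group G] [Countable G] [MeasurableSpace G] [DiscreteMeasurableSpace G]
  {p : G → ℝ≥0∞} {P : Measure (ℕ → G)} (hP : IsRWMeasure p P)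
include hP

lemma ae_iff_forall_ae_pathCons {Q : (ℕ → G) → Prop} :
    (∀ᵐ ω ∂P, Q ω) ↔ ∀ g, p g ≠ 0 → ∀ᵐ ω ∂P, Q (pathCons g ω) := by
  conv_lhs => rw [hP.eq_sum_smul_map_pathCons, Measure.ae_sum_iff]
  refine forall_congr' fun g => ?_
  by_cases hg : p g = 0
  · simp [hg]
  · simp [hg, (measurableEmbedding_pathCons g).ae_map_iff]

lemma hasSum_integral_pathCons {F : (ℕ → G) → ℝ} (hF : Integrable F P) :
    HasSum (fun g => (p g).toReal * ∫ ω, F (pathCons g ω) ∂P) (∫ ω, F ω ∂P) := by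
  have hdecomp := hP.eq_sum_smul_map_pathCons
  rw [hdecomp] at hF
  have hsum := hasSum_integral_measure hF
  simpa only [← hdecomp, integral_smul_measure, smul_eq_mul,
    (measurableEmbedding_pathCons _).integral_map] using hsum

lemma setLIntegral_walk_succ_eq_tsum {F : (ℕ → G) → ℝ≥0∞} (hF : Measurable F) (n : ℕ) (x : G) :
    ∫⁻ ω in {ω | walk ω (n + 1) = x}, F ω ∂P =
      ∑' g, p g * ∫⁻ ω in {ω | walk ω n = g⁻¹ * x}, F (pathCons g ω) ∂P := by
  rw [← lintegral_indicator (measurableSet_walk_eq (n + 1) x),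
    hP.lintegral_eq_tsum (hF.indicator (measurableSet_walk_eq (n + 1) x))]
  refine tsum_congr fun g => ?_
  rw [← lintegral_indicator (measurableSet_walk_eq n _)]
  simp only [indicator, mem_ofPred_eq, walk_pathCons, eq_inv_mul_iff_mul_eq]

lemma ne_top (g : G) : p g ≠ ∞ := hP.piN_one g ▸ hP.piN_ne_top 1 g

end IsRWMeasure

section Cocycle

variable {G : Type*} {B : Type*} [MeasurableSpace B]

/-- A measurable map `b` from the path space to a space `B` with an action `a` of the increments
which is almost surely equivariant: the point attached to a path is the translate, by the first
increment, of the point attached to the shifted path. The law of `b` is then stationary. -/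
structure IsEquivariantBoundaryMap [MeasurableSpace G] (P : Measure (ℕ → G)) (a : G → B → B)
    (b : (ℕ → G) → B) : Prop where
  measurable_act : ∀ g, Measurable (a g)
  measurable : Measurable b
  ae_eq : ∀ᵐ ω ∂P, b ω = a (ω 0) (b (pathShift ω))

/-- The density of the translate of `ν` by `g` with respect to `ν`. -/
def translateDensity (ν : Measure B) (a : G → B → B) (g : G) : B → ℝ≥0∞ :=
  (ν.map (a g)).rnDeriv ν

/-- The logarithm of the density of the translate of `ν` by the first increment of a path, at the
boundary point of the path; its mean is the differential entropy. -/
def logTranslateDensity (ν : Measure B) (a : G → B → B) (b : (ℕ → G) → B) (ω : ℕ → G) : ℝ :=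
  llr (ν.map (a (ω 0))) ν (b ω)

/-- The reciprocal `(d (wₙ ν) / dν)⁻¹` of the Radon-Nikodym cocycle along the walk, at the boundary
point of the path. -/
def reciprocalCocycle (ν : Measure B) (a : G → B → B) (b : (ℕ → G) → B) (n : ℕ)
    (ω : ℕ → G) : ℝ≥0∞ :=
  ∏ k ∈ Finset.range n, (translateDensity ν a (ω k) (b (pathShift^[k] ω)))⁻¹

lemma measurable_translateDensity (ν : Measure B) (a : G → B → B) (g : G) :
    Measurable (translateDensity ν a g) :=
  Measure.measurable_rnDeriv _ _

lemma reciprocalCocycle_succ (ν : Measure B) (a : G → B → B) (b : (ℕ → G) → B) (n : ℕ)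
    (ω : ℕ → G) : reciprocalCocycle ν a b (n + 1) ω =
      (translateDensity ν a (ω 0) (b ω))⁻¹ * reciprocalCocycle ν a b n (pathShift ω) := by
  rw [reciprocalCocycle, Finset.prod_range_succ', mul_comm]
  rfl

variable [Countable G] [MeasurableSpace G] [DiscreteMeasurableSpace G] {b : (ℕ → G) → B}

lemma measurable_reciprocalCocycle (hb : Measurable b) (ν : Measure B) (a : G → B → B) (n : ℕ) :
    Measurable (reciprocalCocycle ν a b n) := by
  refine Finset.measurable_fun_prod _ fun k _ => ?_
  have hfirst : Measurable fun ω : ℕ → G => (translateDensity ν a (ω 0) (b ω))⁻¹ :=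
    measurable_uncurry_apply_zero hb fun g => (measurable_translateDensity ν a g).inv
  simpa only [Function.comp_def, pathShift_iterate_apply, zero_add] using
    hfirst.comp (measurable_pathShift.iterate k)

lemma measurable_logTranslateDensity (hb : Measurable b) (ν : Measure B) (a : G → B → B) :
    Measurable (logTranslateDensity ν a b) :=
  measurable_uncurry_apply_zero hb (Φ := fun g => llr (ν.map (a g)) ν)
    fun _ => measurable_llr _ _

end Cocycle

namespace IsEquivariantBoundaryMap

section IsProbabilityMeasure

variable {G : Type*} [MeasurableSpace G] {B : Type*} [MeasurableSpace B] {P : Measure (ℕ → G)}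
  [IsProbabilityMeasure P] {a : G → B → B} {b : (ℕ → G) → B}

lemma isProbabilityMeasure_map (hb : IsEquivariantBoundaryMap P a b) :
    IsProbabilityMeasure (P.map b) :=
  Measure.isProbabilityMeasure_map hb.measurable.aemeasurable

lemma isProbabilityMeasure_map_map (hb : IsEquivariantBoundaryMap P a b) (g : G) :
    IsProbabilityMeasure ((P.map b).map (a g)) :=
  have := hb.isProbabilityMeasure_map
  Measure.isProbabilityMeasure_map (hb.measurable_act g).aemeasurable

end IsProbabilityMeasure

variable {G : Type*} [Group G] [Countable G] [MeasurableSpace G] [DiscreteMeasurableSpace G]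
  {p : G → ℝ≥0∞} {P : Measure (ℕ → G)} {B : Type*} [MeasurableSpace B] {a : G → B → B}
  {b : (ℕ → G) → B} (hb : IsEquivariantBoundaryMap P a b) (hP : IsRWMeasure p P)
include hb hP

lemma ae_pathCons_eq {g : G} (hg : p g ≠ 0) : ∀ᵐ ω ∂P, b (pathCons g ω) = a g (b ω) :=
  hP.ae_iff_forall_ae_pathCons.1 hb.ae_eq g hg

lemma ae_apply_zero_of_ae_map {Q : G → B → Prop}
    (hQ : ∀ g, p g ≠ 0 → ∀ᵐ η ∂((P.map b).map (a g)), Q g η) : ∀ᵐ ω ∂P, Q (ω 0) (b ω) := by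
  refine hP.ae_iff_forall_ae_pathCons.2 fun g hg => ?_
  have hQg := ae_of_ae_map hb.measurable.aemeasurable
    (ae_of_ae_map (hb.measurable_act g).aemeasurable (hQ g hg))
  filter_upwards [hb.ae_pathCons_eq hP hg, hQg] with ω hω hQω
  rw [hω]
  exact hQω

lemma lintegral_eq_tsum {Φ : G → B → ℝ≥0∞} (hΦ : ∀ g, Measurable (Φ g)) :
    ∫⁻ ω, Φ (ω 0) (b ω) ∂P = ∑' g, p g * ∫⁻ η, Φ g η ∂((P.map b).map (a g)) := by
  rw [hP.lintegral_eq_tsum (measurable_uncurry_apply_zero hb.measurable hΦ)]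
  refine tsum_congr fun g => ?_
  rcases eq_or_ne (p g) 0 with hg | hg
  · simp only [hg, zero_mul]
  rw [lintegral_map (hΦ g) (hb.measurable_act g),
    lintegral_map (f := fun η => Φ g (a g η)) ((hΦ g).comp (hb.measurable_act g)) hb.measurable]
  congr 1
  refine lintegral_congr_ae ?_
  filter_upwards [hb.ae_pathCons_eq hP hg] with ω hω
  rw [hω]
  rfl

lemma smul_map_le (g : G) : p g • (P.map b).map (a g) ≤ P.map b := by
  refine Measure.le_iff.2 fun A hA => ?_
  have hsum := hb.lintegral_eq_tsum hP (Φ := fun _ => A.indicator 1)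
    fun _ => measurable_one.indicator hA
  rw [← lintegral_map (measurable_one.indicator hA) hb.measurable] at hsum
  simp only [lintegral_indicator_one hA] at hsum
  rw [hsum]
  exact ENNReal.le_tsum (f := fun g => p g * (P.map b).map (a g) A) g

lemma map_absolutelyContinuous {g : G} (hg : p g ≠ 0) : (P.map b).map (a g) ≪ P.map b :=
  (Measure.absolutelyContinuous_smul hg).trans (hb.smul_map_le hP g).absolutelyContinuous

lemma ae_mul_translateDensity_le_one {g : G} (hg : p g ≠ 0) :
    ∀ᵐ η ∂((P.map b).map (a g)), p g * translateDensity (P.map b) a g η ≤ 1 := by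
  have := hP.1
  have := hb.isProbabilityMeasure_map
  have := hb.isProbabilityMeasure_map_map g
  refine (hb.map_absolutelyContinuous hP hg).ae_le ?_
  filter_upwards [Measure.rnDeriv_le_one_of_le (hb.smul_map_le hP g),
    Measure.rnDeriv_smul_left_of_ne_top ((P.map b).map (a g)) (P.map b) (hP.ne_top g)]
    with η hle hsmul
  rwa [hsmul] at hle

lemma ae_translateDensity_bounds : ∀ᵐ ω ∂P, p (ω 0) ≠ 0 ∧
    translateDensity (P.map b) a (ω 0) (b ω) ≠ 0 ∧
      p (ω 0) * translateDensity (P.map b) a (ω 0) (b ω) ≤ 1 := by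
  have := hP.1
  have := hb.isProbabilityMeasure_map
  refine hb.ae_apply_zero_of_ae_map hP (Q := fun g η => p g ≠ 0 ∧
    translateDensity (P.map b) a g η ≠ 0 ∧ p g * translateDensity (P.map b) a g η ≤ 1)
    fun g hg => ?_
  have := hb.isProbabilityMeasure_map_map g
  filter_upwards [Measure.rnDeriv_pos (hb.map_absolutelyContinuous hP hg),
    hb.ae_mul_translateDensity_le_one hP hg] with η hpos hle
  exact ⟨hg, hpos.ne', hle⟩

lemma ae_translateDensity_ne_top :
    ∀ᵐ ω ∂P, translateDensity (P.map b) a (ω 0) (b ω) ≠ ∞ := by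
  filter_upwards [hb.ae_translateDensity_bounds hP] with ω ⟨hp, _, hle⟩ htop
  rw [htop, ENNReal.mul_top hp] at hle
  exact ENNReal.top_ne_one (top_unique hle ▸ rfl)

lemma setLIntegral_mul_reciprocalCocycle_le (n : ℕ) (x : G) {ψ : B → ℝ≥0∞} (hψ : Measurable ψ) :
    ∫⁻ ω in {ω | walk ω n = x}, ψ (b ω) * reciprocalCocycle (P.map b) a b n ω ∂P ≤
      piN p n x * ∫⁻ η, ψ η ∂(P.map b) := by
  have := hP.1
  have := hb.isProbabilityMeasure_map
  induction n generalizing x ψ with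
  | zero =>
    by_cases hx : x = 1
    · simp [hx, walk_zero, piN, reciprocalCocycle, lintegral_map hψ hb.measurable]
    · simp [Ne.symm hx, walk_zero]
  | succ n ih =>
    rw [hP.setLIntegral_walk_succ_eq_tsum
      (F := fun ω => ψ (b ω) * reciprocalCocycle (P.map b) a b (n + 1) ω)
      ((hψ.comp hb.measurable).mul (measurable_reciprocalCocycle hb.measurable _ _ _)),
      hP.piN_succ', ← ENNReal.tsum_mul_right]
    refine ENNReal.tsum_le_tsum fun g => ?_
    rcases eq_or_ne (p g) 0 with hg | hg
    · simp only [hg, zero_mul, le_refl]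
    have := hb.isProbabilityMeasure_map_map g
    set r := translateDensity (P.map b) a g
    have hψr : Measurable fun η => ψ η * (r η)⁻¹ := hψ.mul (measurable_translateDensity _ a g).inv
    have hstep : ∫⁻ ω in {ω | walk ω n = g⁻¹ * x},
          ψ (b (pathCons g ω)) * reciprocalCocycle (P.map b) a b (n + 1) (pathCons g ω) ∂P =
        ∫⁻ ω in {ω | walk ω n = g⁻¹ * x},
          ψ (a g (b ω)) * (r (a g (b ω)))⁻¹ * reciprocalCocycle (P.map b) a b n ω ∂P := by
      refine lintegral_congr_ae (ae_restrict_of_ae ?_)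
      filter_upwards [hb.ae_pathCons_eq hP hg] with ω hω
      rw [reciprocalCocycle_succ, hω, mul_assoc]
      rfl
    rw [hstep, mul_assoc]
    gcongr
    refine (ih (g⁻¹ * x) (ψ := fun η => ψ (a g η) * (r (a g η))⁻¹)
      (hψr.comp (hb.measurable_act g))).trans (mul_le_mul_right ?_ _)
    rw [← lintegral_map (f := fun η => ψ η * (r η)⁻¹) hψr (hb.measurable_act g)]
    exact lintegral_mul_inv_rnDeriv_le (hb.map_absolutelyContinuous hP hg) hψ

lemma measure_inter_preimage_le {n : ℕ} {x : G} {E : Set (ℕ → G)} (hE : MeasurableSet E)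
    (hEx : ∀ ω ∈ E, walk ω n = x) {K : ℝ≥0∞} (hK0 : K ≠ 0) (hK : K ≠ ∞)
    (hEK : ∀ ω ∈ E, K⁻¹ ≤ reciprocalCocycle (P.map b) a b n ω) {A : Set B}
    (hA : MeasurableSet A) : P (E ∩ b ⁻¹' A) ≤ K * (piN p n x * P.map b A) := by
  have hEA := hE.inter (hb.measurable hA)
  have hlower : K⁻¹ * P (E ∩ b ⁻¹' A) ≤ piN p n x * P.map b A := by
    have hle := hb.setLIntegral_mul_reciprocalCocycle_le hP n x (measurable_one.indicator hA)
    rw [lintegral_indicator_one hA] at hle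
    refine le_trans ?_ hle
    rw [← setLIntegral_const]
    refine (setLIntegral_mono_ae' hEA (.of_forall fun ω hω => ?_)).trans
      (lintegral_mono_set fun ω hω => hEx ω hω.1)
    rw [indicator_of_mem (show b ω ∈ A from hω.2), Pi.one_apply, one_mul]
    exact hEK ω hω.1
  rwa [← ENNReal.mul_le_mul_iff_right hK0 hK, ← mul_assoc, ENNReal.mul_inv_cancel hK0 hK,
    one_mul] at hlower

variable (hH : FiniteFirstMoment p fun x => -Real.log (p x).toReal)

lemma lintegral_ofReal_neg_logTranslateDensity_le_one :
    ∫⁻ ω, ENNReal.ofReal (-logTranslateDensity (P.map b) a b ω) ∂P ≤ 1 := by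
  have := hP.1
  have := hb.isProbabilityMeasure_map
  refine (hb.lintegral_eq_tsum hP
    (Φ := fun g η => ENNReal.ofReal (-llr ((P.map b).map (a g)) (P.map b) η))
    fun g => (measurable_llr _ _).neg.ennreal_ofReal).trans_le ?_
  rw [← hP.tsum_eq_one]
  refine ENNReal.tsum_le_tsum fun g => ?_
  rcases eq_or_ne (p g) 0 with hg | hg
  · simp only [hg, zero_mul, le_refl]
  have := hb.isProbabilityMeasure_map_map g
  exact mul_le_of_le_one_right'
    (lintegral_ofReal_neg_llr_le_one (hb.map_absolutelyContinuous hP hg))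

lemma ae_logTranslateDensity_le :
    ∀ᵐ ω ∂P, logTranslateDensity (P.map b) a b ω ≤ -Real.log (p (ω 0)).toReal := by
  filter_upwards [hb.ae_translateDensity_bounds hP, hb.ae_translateDensity_ne_top hP]
    with ω ⟨hp, hpos, hle⟩ htop
  have hle' := ENNReal.toReal_le_of_le_ofReal zero_le_one (hle.trans_eq ENNReal.ofReal_one.symm)
  rw [ENNReal.toReal_mul] at hle'
  have hp' := ENNReal.toReal_pos hp (hP.ne_top _)
  have hpos' := ENNReal.toReal_pos hpos htop
  have hlog := Real.log_nonpos (mul_pos hp' hpos').le hle'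
  rw [Real.log_mul hp'.ne' hpos'.ne'] at hlog
  change Real.log (translateDensity (P.map b) a (ω 0) (b ω)).toReal ≤ _
  linarith

include hH in
lemma integrable_logTranslateDensity : Integrable (logTranslateDensity (P.map b) a b) P := by
  have hmeas := measurable_logTranslateDensity hb.measurable (P.map b) a
  have hlog0 (g : G) : 0 ≤ -Real.log (p g).toReal := by
    simpa only [hP.piN_one] using hP.neg_log_piN_nonneg 1 g
  have hneg : Integrable (fun ω => max (-logTranslateDensity (P.map b) a b ω) 0) P := by
    refine ⟨(hmeas.neg.max measurable_const).aestronglyMeasurable, ?_⟩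
    simp only [HasFiniteIntegral, Real.enorm_eq_ofReal (le_max_right _ _), ENNReal.ofReal_max,
      ENNReal.ofReal_zero, max_zero]
    exact (hb.lintegral_ofReal_neg_logTranslateDensity_le_one hP).trans_lt ENNReal.one_lt_top
  refine ((hP.integrable_comp_apply_zero hlog0 hH).add hneg).mono' hmeas.aestronglyMeasurable ?_
  filter_upwards [hb.ae_logTranslateDensity_le hP] with ω hω
  rw [Real.norm_eq_abs, Pi.add_apply, abs_le]
  have hmax := le_max_left (-logTranslateDensity (P.map b) a b ω) 0
  have hmax0 := le_max_right (-logTranslateDensity (P.map b) a b ω) 0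
  constructor <;> linarith [hlog0 (ω 0)]

include hH in
lemma hasSum_integral_logTranslateDensity :
    HasSum (fun g => (p g).toReal *
        ∫ η, llr ((P.map b).map (a g)) (P.map b) η ∂((P.map b).map (a g)))
      (∫ ω, logTranslateDensity (P.map b) a b ω ∂P) := by
  have hsum := hP.hasSum_integral_pathCons (hb.integrable_logTranslateDensity hP hH)
  convert hsum using 2 with g
  rcases eq_or_ne (p g) 0 with hg | hg
  · simp only [hg, ENNReal.toReal_zero, zero_mul]
  have hllr := measurable_llr ((P.map b).map (a g)) (P.map b)
  rw [integral_map (hb.measurable_act g).aemeasurable hllr.aestronglyMeasurable,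
    integral_map hb.measurable.aemeasurable
      (f := fun η => llr ((P.map b).map (a g)) (P.map b) (a g η))
      (hllr.comp (hb.measurable_act g)).aestronglyMeasurable]
  congr 1
  refine integral_congr_ae ?_
  filter_upwards [hb.ae_pathCons_eq hP hg] with ω hω
  rw [logTranslateDensity, hω]
  rfl

lemma ae_forall_translateDensity_iterate_eq :
    ∀ᵐ ω ∂P, ∀ k, translateDensity (P.map b) a (ω k) (b (pathShift^[k] ω)) =
      ENNReal.ofReal (Real.exp (logTranslateDensity (P.map b) a b (pathShift^[k] ω))) := by
  have := hP.1
  refine ae_all_iff.2 fun k => ?_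
  have hfirst : ∀ᵐ ω ∂P, translateDensity (P.map b) a (ω 0) (b ω) =
      ENNReal.ofReal (Real.exp (logTranslateDensity (P.map b) a b ω)) := by
    filter_upwards [hb.ae_translateDensity_bounds hP, hb.ae_translateDensity_ne_top hP]
      with ω hω htop
    have hexp : Real.exp (logTranslateDensity (P.map b) a b ω) =
        (translateDensity (P.map b) a (ω 0) (b ω)).toReal :=
      Real.exp_log (ENNReal.toReal_pos hω.2.1 htop)
    rw [hexp, ENNReal.ofReal_toReal htop]
  simpa only [pathShift_iterate_apply, zero_add] using
    (hP.measurePreserving_pathShift.iterate k).quasiMeasurePreserving.ae hfirst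

include hH in
lemma ae_eventually_inv_le_reciprocalCocycle {c : ℝ}
    (hc : ∫ ω, logTranslateDensity (P.map b) a b ω ∂P < c) :
    ∀ᵐ ω ∂P, ∀ᶠ n : ℕ in atTop,
      (ENNReal.ofReal (Real.exp (c * n)))⁻¹ ≤ reciprocalCocycle (P.map b) a b n ω := by
  have := hP.1
  filter_upwards [hb.ae_forall_translateDensity_iterate_eq hP,
    ae_tendsto_birkhoffAverage hP.ergodic_pathShift
      (measurable_logTranslateDensity hb.measurable _ a)
      (hb.integrable_logTranslateDensity hP hH)] with ω hω hlim
  filter_upwards [hlim.eventually_lt_const hc, eventually_gt_atTop 0] with n hn hn0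
  have hsum : birkhoffSum pathShift (logTranslateDensity (P.map b) a b) n ω ≤ c * n := by
    rw [birkhoffAverage, smul_eq_mul, inv_mul_lt_iff₀ (by positivity), mul_comm] at hn
    exact hn.le
  calc _ ≤ (ENNReal.ofReal (Real.exp
        (birkhoffSum pathShift (logTranslateDensity (P.map b) a b) n ω)))⁻¹ := by gcongr
    _ = reciprocalCocycle (P.map b) a b n ω := by
      rw [birkhoffSum, Real.exp_sum, ENNReal.ofReal_prod_of_nonneg fun _ _ => (Real.exp_pos _).le,
        reciprocalCocycle, ← ENNReal.prod_inv_distrib]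
      · simp only [hω]
      · exact fun _ _ _ _ _ => .inr (hω _ ▸ ENNReal.ofReal_ne_top)

end IsEquivariantBoundaryMap

/-! ### Eventual Gromov products and the boundary quasi-metric -/

section Geometry

variable {X : Type*} [MetricSpace X] {o : X} {δ : ℝ}

lemma gp_nonneg (o x y : X) : 0 ≤ gp o x y :=
  div_nonneg (sub_nonneg.2 (dist_triangle x o y)) zero_le_two

lemma gp_comm (o x y : X) : gp o x y = gp o y x := by
  rw [gp, gp, dist_comm x o, dist_comm o y, dist_comm x y, add_comm (dist o x)]

lemma sub_le_gp (o x y : X) : dist o x - dist x y ≤ gp o x y := by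
  rw [gp, dist_comm x o]
  linarith [dist_triangle_right o x y]

lemma IsHyperbolicWith.nonneg (hδ : IsHyperbolicWith X δ) (x : X) : 0 ≤ δ := by
  simpa only [min_self, sub_le_self_iff] using hδ x x x x

/-- The tails of the sequences `u` and `v` have Gromov product at least `t`. A constant sequence
is allowed, which expresses that a point of `X` lies far out along the way to a boundary point. -/
def GpEventuallyGE (o : X) (t : ℝ) (u v : ℕ → X) : Prop :=
  ∀ᶠ q : ℕ × ℕ in atTop, t ≤ gp o (u q.1) (v q.2)

lemma bndRel_iff {u v : DivSeq X o} : bndRel o u v ↔ ∀ t, GpEventuallyGE o t u.1 v.1 :=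
  tendsto_atTop

namespace GpEventuallyGE

variable {u v w : ℕ → X} {s t : ℝ}

lemma mono (h : GpEventuallyGE o t u v) (hst : s ≤ t) : GpEventuallyGE o s u v :=
  Eventually.mono h fun _ => hst.trans

lemma symm (h : GpEventuallyGE o t u v) : GpEventuallyGE o t v u := by
  obtain ⟨N, hN⟩ := eventually_atTop_prod_self.1 h
  exact eventually_atTop_prod_self.2 ⟨N, fun k m hk hm => (hN m k hm hk).trans_eq (gp_comm _ _ _)⟩

lemma trans (hδ : IsHyperbolicWith X δ) (huv : GpEventuallyGE o s u v)
    (hvw : GpEventuallyGE o t v w) : GpEventuallyGE o (min s t - δ) u w := by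
  obtain ⟨N, hN⟩ := eventually_atTop_prod_self.1 huv
  obtain ⟨M, hM⟩ := eventually_atTop_prod_self.1 hvw
  refine eventually_atTop_prod_self.2 ⟨max N M, fun k m hk hm => ?_⟩
  have hu := hN k (max N M) (le_of_max_le_left hk) (le_max_left _ _)
  have hw := hM (max N M) m (le_max_right _ _) (le_of_max_le_right hm)
  exact (sub_le_sub_right (min_le_min hu hw) δ).trans (hδ _ _ _ _)

lemma const_of_eventually {x : X} (h : ∀ᶠ m in atTop, t ≤ gp o x (v m)) :
    GpEventuallyGE o t (fun _ => x) v := by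
  obtain ⟨N, hN⟩ := eventually_atTop.1 h
  exact eventually_atTop_prod_self.2 ⟨N, fun _ m _ hm => hN m hm⟩

lemma dist_le_of_const (hδ : IsHyperbolicWith X δ) {x y : X}
    (hx : GpEventuallyGE o t (fun _ => x) u) (hy : GpEventuallyGE o t (fun _ => y) u) :
    dist x y ≤ dist o x + dist o y - 2 * (t - δ) := by
  obtain ⟨_, hxy⟩ := (hx.trans hδ hy.symm).exists
  rw [min_self, gp, dist_comm x o] at hxy
  linarith

end GpEventuallyGE

lemma equivalence_bndRel (hδ : IsHyperbolicWith X δ) : Equivalence (bndRel o) where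
  refl u := u.2
  symm h := bndRel_iff.2 fun t => (bndRel_iff.1 h t).symm
  trans huv hvw := bndRel_iff.2 fun t => by
    simpa only [min_self, add_sub_cancel_right] using
      (bndRel_iff.1 huv (t + δ)).trans hδ (bndRel_iff.1 hvw (t + δ))

lemma mkB_eq_iff (hδ : IsHyperbolicWith X δ) {u v : DivSeq X o} :
    mkB o u = mkB o v ↔ bndRel o u v :=
  (equivalence_bndRel hδ).quot_mk_eq_iff u v

lemma liminf_gp_nonneg (o : X) (u v : ℕ → X) :
    0 ≤ liminf (fun q : ℕ × ℕ => gp o (u q.1) (v q.2)) atTop := by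
  rw [liminf_eq]
  exact Real.sSup_nonneg' ⟨0, .of_forall fun _ => gp_nonneg _ _ _, le_rfl⟩

lemma gpEventuallyGE_of_lt_liminf {u v : ℕ → X} {t : ℝ}
    (h : t < liminf (fun q : ℕ × ℕ => gp o (u q.1) (v q.2)) atTop) : GpEventuallyGE o t u v :=
  (eventually_lt_of_lt_liminf h (isBoundedUnder_of ⟨0, fun _ => gp_nonneg _ _ _⟩)).mono
    fun _ => le_of_lt

lemma GpEventuallyGE.le_liminf {u v : DivSeq X o} {t : ℝ} (h : GpEventuallyGE o t u.1 v.1)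
    (huv : ¬ bndRel o u v) : t ≤ liminf (fun q : ℕ × ℕ => gp o (u.1 q.1) (v.1 q.2)) atTop := by
  obtain ⟨K, hK⟩ := not_forall.1 (mt bndRel_iff.2 huv)
  refine le_liminf_of_le ⟨K, fun a ha => ?_⟩ h
  exact le_of_not_ge fun hKa => hK (GpEventuallyGE.mono (eventually_map.1 ha) hKa)

lemma gpEventuallyGE_of_qB_lt (hδ : IsHyperbolicWith X δ) {u v : DivSeq X o} {t : ℝ}
    (h : qB o (mkB o u) (mkB o v) < Real.exp (-t)) : GpEventuallyGE o t u.1 v.1 := by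
  by_cases heq : mkB o u = mkB o v
  · exact bndRel_iff.1 ((mkB_eq_iff hδ).1 heq) t
  rw [qB, if_neg heq, Real.exp_lt_exp, neg_lt_neg_iff] at h
  refine gpEventuallyGE_of_lt_liminf (h.trans_le (csInf_le ⟨0, ?_⟩ ⟨u, v, rfl, rfl, rfl⟩))
  rintro _ ⟨u', v', _, _, rfl⟩
  exact liminf_gp_nonneg _ _ _

lemma GpEventuallyGE.sub_le_gpB (hδ : IsHyperbolicWith X δ) {u v : DivSeq X o} {t : ℝ}
    (h : GpEventuallyGE o t u.1 v.1) (hne : mkB o u ≠ mkB o v) :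
    t - 2 * δ ≤ gpB o (mkB o u) (mkB o v) := by
  refine le_csInf ⟨_, u, v, rfl, rfl, rfl⟩ ?_
  rintro _ ⟨u', v', hu, hv, rfl⟩
  have huu := bndRel_iff.1 ((mkB_eq_iff hδ).1 hu) t
  have hvv := bndRel_iff.1 ((mkB_eq_iff hδ).1 hv.symm) t
  refine ((huu.trans hδ (h.trans hδ hvv)).mono ?_).le_liminf fun huv => hne ?_
  · rw [min_self, min_eq_right (sub_le_self t (hδ.nonneg o))]
    linarith
  · rw [← hu, ← hv, mkB_eq_iff hδ]
    exact huv

lemma GpEventuallyGE.qB_lt (hδ : IsHyperbolicWith X δ) {u v : DivSeq X o} {t : ℝ}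
    (h : GpEventuallyGE o t u.1 v.1) :
    qB o (mkB o u) (mkB o v) < Real.exp (-(t - 2 * δ - 1)) := by
  by_cases heq : mkB o u = mkB o v
  · rw [qB, if_pos heq]
    exact Real.exp_pos _
  · rw [qB, if_neg heq, Real.exp_lt_exp, neg_lt_neg_iff]
    linarith [h.sub_le_gpB hδ heq]

lemma qB_self_lt_exp (ξ : Boundary X o) (t : ℝ) : qB o ξ ξ < Real.exp t := by
  rw [qB, if_pos rfl]
  exact Real.exp_pos t

lemma measurableSet_qball (ξ : Boundary X o) (r : ℝ) : MeasurableSet (qball (qB o) ξ r) :=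
  MeasurableSpace.measurableSet_generateFrom ⟨ξ, r, rfl⟩

lemma iInter_qball_eq_singleton (ξ : Boundary X o) :
    ⋂ k : ℕ, qball (qB o) ξ (Real.exp (-k)) = {ξ} := by
  refine Subset.antisymm (fun η hη => ?_)
    (singleton_subset_iff.2 (mem_iInter.2 fun k => qB_self_lt_exp ξ _))
  by_contra hne
  obtain ⟨k, hk⟩ := exists_nat_gt (gpB o ξ η)
  have hball : qB o ξ η < Real.exp (-k) := mem_iInter.1 hη k
  rw [qB, if_neg (Ne.symm hne), Real.exp_lt_exp, neg_lt_neg_iff] at hball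
  exact lt_asymm hk hball

instance : MeasurableSingletonClass (Boundary X o) where
  measurableSet_singleton ξ := by
    rw [← iInter_qball_eq_singleton]
    exact .iInter fun k => measurableSet_qball _ _

end Geometry

/-! ### Linear progress of sequences with sublinear steps -/

section Tracking

variable {X : Type*} [MetricSpace X] {o : X} {δ : ℝ} {z : ℕ → X}

lemma tendsto_dist_add_div (hstep : Tendsto (fun n : ℕ => dist (z n) (z (n + 1)) / n) atTop (𝓝 0))
    (i : ℕ) : Tendsto (fun n : ℕ => dist (z n) (z (n + i)) / n) atTop (𝓝 0) := by
  induction i with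
  | zero => simp only [add_zero, dist_self, zero_div, tendsto_const_nhds]
  | succ i ih =>
    have hsum := ih.add (tendsto_comp_add_div hstep i)
    rw [add_zero] at hsum
    refine squeeze_zero (fun n => by positivity) (fun n => ?_) hsum
    rw [← add_div, ← add_assoc]
    gcongr
    exact dist_triangle _ _ _

lemma sub_le_gp_of_forall_le_gp (hδ : IsHyperbolicWith X δ) {s : ℝ} {N L : ℕ} (hL : 0 < L)
    (hδL : δ ≤ s * L) (hblock : ∀ n ≥ N, ∀ i ≤ L, s * n ≤ gp o (z n) (z (n + i))) (j : ℕ) :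
    ∀ n ≥ N, s * n - δ ≤ gp o (z n) (z (n + j)) := by
  induction j using Nat.strong_induction_on with
  | h j ih =>
    intro n hn
    rcases le_or_gt j L with hjL | hjL
    · exact (sub_le_self _ (hδ.nonneg o)).trans (hblock n hn j hjL)
    have htail := ih (j - L) (by lia) (n + L) (by lia)
    rw [add_assoc, Nat.add_sub_of_le hjL.le] at htail
    push_cast at htail
    refine (sub_le_sub_right (le_min (hblock n hn L le_rfl) ?_) δ).trans (hδ _ _ (z (n + L)) o)
    linarith

lemma eventually_forall_mul_le_gp (hδ : IsHyperbolicWith X δ) {l c : ℝ} (hcl : c < l)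
    (hdrift : Tendsto (fun n : ℕ => dist o (z n) / n) atTop (𝓝 l))
    (hstep : Tendsto (fun n : ℕ => dist (z n) (z (n + 1)) / n) atTop (𝓝 0)) :
    ∀ᶠ n : ℕ in atTop, ∀ m ≥ n, c * n ≤ gp o (z n) (z m) := by
  rcases le_or_gt c 0 with hc | hc
  · exact .of_forall fun n m _ =>
      (mul_nonpos_of_nonpos_of_nonneg hc n.cast_nonneg).trans (gp_nonneg _ _ _)
  obtain ⟨s, hcs, hsl⟩ := exists_between hcl
  have hs : 0 < s := hc.trans hcs
  obtain ⟨L, hL⟩ := exists_nat_gt (max 0 (δ / s))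
  obtain ⟨hL0, hδL⟩ := max_lt_iff.1 hL
  rw [div_lt_iff₀' hs] at hδL
  have hblock : ∀ᶠ n : ℕ in atTop, ∀ i ∈ Iic L, s * n ≤ gp o (z n) (z (n + i)) := by
    refine (eventually_all_finite (finite_Iic L)).2 fun i _ => ?_
    have hlim := hdrift.sub (tendsto_dist_add_div hstep i)
    rw [sub_zero] at hlim
    filter_upwards [hlim.eventually_const_lt hsl, eventually_gt_atTop 0] with n hn hn0
    rw [← sub_div, lt_div_iff₀ (by positivity)] at hn
    exact hn.le.trans (sub_le_gp _ _ _)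
  obtain ⟨N, hN⟩ := eventually_atTop.1 hblock
  obtain ⟨M, hM⟩ := exists_nat_gt (δ / (s - c))
  filter_upwards [eventually_ge_atTop (max N M)] with n hn m hm
  have hgp := sub_le_gp_of_forall_le_gp hδ (Nat.cast_pos.1 hL0) hδL.le hN (m - n) n
    (le_of_max_le_left hn)
  rw [Nat.add_sub_of_le hm] at hgp
  have hMn : (M : ℝ) ≤ n := Nat.cast_le.2 (le_of_max_le_right hn)
  have hδn := hM.trans_le hMn
  rw [div_lt_iff₀' (sub_pos.2 hcs)] at hδn
  linarith

end Tracking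

/-! ### Random walks of isometries -/

section OrbitSeminorm

variable {G X : Type*} [Group G] [MetricSpace X]

/-- The displacement of the base point `o` under an isometric action, as a length function. -/
def orbitSeminorm (ρ : G →* (X ≃ᵢ X)) (o : X) : GroupSeminorm G where
  toFun g := dist o (ρ g o)
  map_one' := by rw [map_one, IsometryEquiv.coe_one, id, dist_self]
  mul_le' x y := by
    rw [map_mul, IsometryEquiv.mul_apply, ← (ρ x).dist_eq o (ρ y o)]
    exact dist_triangle _ _ _
  inv' x := by
    rw [← (ρ x).dist_eq, ← IsometryEquiv.mul_apply, ← map_mul, mul_inv_cancel, map_one,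
      IsometryEquiv.coe_one, id, dist_comm]

lemma dist_orbit_inv_mul (ρ : G →* (X ≃ᵢ X)) (o : X) (x y : G) :
    dist o (ρ (x⁻¹ * y) o) = dist (ρ x o) (ρ y o) := by
  rw [← (ρ x).dist_eq, ← IsometryEquiv.mul_apply, ← map_mul, mul_inv_cancel_left]

lemma dist_orbit_walk_succ (ρ : G →* (X ≃ᵢ X)) (o : X) (ω : ℕ → G) (n : ℕ) :
    dist (ρ (walk ω n) o) (ρ (walk ω (n + 1)) o) = dist o (ρ (ω n) o) := by
  rw [← dist_orbit_inv_mul, walk_succ, inv_mul_cancel_left]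

end OrbitSeminorm

lemma mkB_eq_of_shift {X : Type*} [MetricSpace X] {o : X} {u v : DivSeq X o}
    (h : ∀ n, v.1 n = u.1 (n + 1)) : mkB o u = mkB o v := by
  refine Quot.sound ?_
  simp only [bndRel, h]
  have hu : Tendsto (fun q : ℕ × ℕ => gp o (u.1 q.1) (u.1 q.2)) (atTop ×ˢ atTop) atTop := by
    rw [prod_atTop_atTop_eq]
    exact u.2
  rw [← prod_atTop_atTop_eq]
  exact hu.comp (tendsto_id.prodMap (tendsto_add_atTop_nat 1))

section IsometricWalk

variable {G : Type*} [Group G] [Countable G] [MeasurableSpace G] [DiscreteMeasurableSpace G]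
  {p : G → ℝ≥0∞} {P : Measure (ℕ → G)} {X : Type*} [MetricSpace X] {o : X} {ρ : G →* (X ≃ᵢ X)}

namespace IsRWMeasure

variable {l c : ℝ}

lemma ae_eventually_dist_orbit_walk_le (hP : IsRWMeasure p P)
    (hmom : FiniteFirstMoment p (orbitSeminorm ρ o)) (hl : HasDrift p (orbitSeminorm ρ o) l)
    (hlc : l < c) : ∀ᵐ ω ∂P, ∀ᶠ n : ℕ in atTop, dist o (ρ (walk ω n) o) ≤ c * n := by
  filter_upwards [hP.ae_tendsto_comp_walk_div hmom hl] with ω hω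
  filter_upwards [hω.eventually_lt_const hlc, eventually_gt_atTop 0] with n hn hn0
  rw [div_lt_iff₀ (by positivity)] at hn
  exact hn.le

lemma ae_eventually_forall_mul_le_gp_walk (hP : IsRWMeasure p P) {δ : ℝ}
    (hδ : IsHyperbolicWith X δ) (hmom : FiniteFirstMoment p (orbitSeminorm ρ o))
    (hl : HasDrift p (orbitSeminorm ρ o) l) (hcl : c < l) :
    ∀ᵐ ω ∂P, ∀ᶠ n : ℕ in atTop,
      ∀ m ≥ n, c * n ≤ gp o (ρ (walk ω n) o) (ρ (walk ω m) o) := by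
  filter_upwards [hP.ae_tendsto_comp_walk_div hmom hl,
    hP.ae_tendsto_apply_div (apply_nonneg (orbitSeminorm ρ o)) hmom] with ω hdrift hstep
  refine eventually_forall_mul_le_gp hδ hcl hdrift ?_
  simp only [dist_orbit_walk_succ]
  exact hstep

lemma isEquivariantBoundaryMap (hP : IsRWMeasure p P)
    (ha : ∀ g, Measurable (bAct o (ρ g))) {b : (ℕ → G) → Boundary X o} (hb : Measurable b)
    (hconv : ∀ᵐ ω ∂P, ∃ h : IsDivergent o fun n => ρ (walk ω n) o, b ω = mkB o ⟨_, h⟩) :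
    IsEquivariantBoundaryMap P (fun g => bAct o (ρ g)) b where
  measurable_act := ha
  measurable := hb
  ae_eq := by
    filter_upwards [hconv, hP.measurePreserving_pathShift.quasiMeasurePreserving.ae hconv]
      with ω ⟨h, hω⟩ ⟨h', hω'⟩
    rw [hω, hω']
    refine mkB_eq_of_shift fun n => ?_
    change ρ (ω 0) (ρ (walk (pathShift ω) n) o) = ρ (walk ω (n + 1)) o
    rw [← IsometryEquiv.mul_apply, ← map_mul, add_comm n 1, walk_add, walk_one,
      Function.iterate_one]

end IsRWMeasure

lemma IsEquivariantBoundaryMap.diffEntropy_eq_integral {b : (ℕ → G) → Boundary X o}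
    (hb : IsEquivariantBoundaryMap P (fun g => bAct o (ρ g)) b) (hP : IsRWMeasure p P)
    (hH : FiniteFirstMoment p fun x => -Real.log (p x).toReal) :
    diffEntropy o (marginalStar p fun g => ρ g) (P.map b) =
      ∫ ω, logTranslateDensity (P.map b) (fun g => bAct o (ρ g)) b ω ∂P := by
  have hfiber := (hb.hasSum_integral_logTranslateDensity hP hH).tsum_fiberwise fun g => ρ g
  rw [← hfiber.tsum_eq, diffEntropy]
  refine tsum_congr fun s => ?_
  have hconst (g : (fun g => ρ g) ⁻¹' {s}) : (p g).toReal *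
        ∫ η, llr ((P.map b).map (bAct o (ρ g))) (P.map b) η ∂((P.map b).map (bAct o (ρ g))) =
      (p g).toReal *
        ∫ η, llr ((P.map b).map (bAct o s)) (P.map b) η ∂((P.map b).map (bAct o s)) := by
    rw [show ρ g = s from g.2]
  rw [tsum_congr hconst, tsum_mul_right, ← ENNReal.tsum_toReal_eq fun g => hP.ne_top _,
    tsum_subtype ((fun g => ρ g) ⁻¹' {s}) p]
  rfl

end IsometricWalk

/-! ### Conditional probabilities and disintegrations -/

section CondProbOf

variable {Ω A : Type*} [MeasurableSpace Ω] [MeasurableSpace A]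

/-- The conditional probability `P(E | b = y)` of the event `E` given the value of `b`, as a
density with respect to the law of `b`. -/
def condProbOf (P : Measure Ω) (b : Ω → A) (E : Set Ω) : A → ℝ≥0∞ :=
  ((P.restrict E).map b).rnDeriv (P.map b)

lemma measurable_condProbOf (P : Measure Ω) (b : Ω → A) (E : Set Ω) :
    Measurable (condProbOf P b E) :=
  Measure.measurable_rnDeriv _ _

variable {P : Measure Ω} [IsFiniteMeasure P] {b : Ω → A}

lemma withDensity_condProbOf (hb : Measurable b) (E : Set Ω) :
    (P.map b).withDensity (condProbOf P b E) = (P.restrict E).map b :=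
  Measure.withDensity_rnDeriv_eq _ _
    ((Measure.absolutelyContinuous_of_le Measure.restrict_le_self).map hb)

lemma setLIntegral_condProbOf (hb : Measurable b) (E : Set Ω) {T : Set A}
    (hT : MeasurableSet T) : ∫⁻ y in T, condProbOf P b E y ∂P.map b = P (E ∩ b ⁻¹' T) := by
  rw [← withDensity_apply _ hT, withDensity_condProbOf hb, Measure.map_apply hb hT,
    Measure.restrict_apply (hb hT), inter_comm]

lemma ae_condProbOf_eq_zero (hb : Measurable b) {E : Set Ω} {S : Set A} (hS : MeasurableSet S)
    (hES : MapsTo b E S) : ∀ᵐ y ∂P.map b, y ∉ S → condProbOf P b E y = 0 := by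
  have hnull : ∫⁻ y in Sᶜ, condProbOf P b E y ∂P.map b = 0 := by
    rw [setLIntegral_condProbOf hb E hS.compl,
      show E ∩ b ⁻¹' Sᶜ = ∅ from eq_empty_of_forall_notMem fun ω hω => hω.2 (hES hω.1),
      measure_empty]
  exact (setLIntegral_eq_zero_iff hS.compl (measurable_condProbOf P b E)).1 hnull

lemma condProbOf_iUnion_ae_eq {ι : Type*} [Countable ι] (hb : Measurable b) {E : ι → Set Ω}
    (hE : ∀ i, MeasurableSet (E i)) (hd : Pairwise (Function.onFun Disjoint E)) :
    condProbOf P b (⋃ i, E i) =ᵐ[P.map b] fun y => ∑' i, condProbOf P b (E i) y := by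
  have hm : Measurable fun y => ∑' i, condProbOf P b (E i) y :=
    Measurable.tsum fun i => measurable_condProbOf P b (E i)
  refine ae_eq_of_forall_setLIntegral_eq_of_sigmaFinite (measurable_condProbOf P b _) hm
    fun T hT _ => ?_
  rw [setLIntegral_condProbOf hb _ hT,
    lintegral_tsum fun i => (measurable_condProbOf P b (E i)).aemeasurable, iUnion_inter,
    measure_iUnion (fun i j hij => (hd hij).mono inter_subset_left inter_subset_left)
      fun i => (hE i).inter (hb hT)]
  simp only [setLIntegral_condProbOf hb _ hT]

lemma measure_condProbOf_lt_half_le (hb : Measurable b) {W : Set Ω} (hW : MeasurableSet W) :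
    P.map b {y | 1 / 2 ≤ condProbOf P b W y}ᶜ ≤ 2 * P Wᶜ := by
  set L := {y | 1 / 2 ≤ condProbOf P b W y}ᶜ
  have hL : MeasurableSet L :=
    (measurableSet_le measurable_const (measurable_condProbOf P b W)).compl
  have hW_le : P (W ∩ b ⁻¹' L) ≤ P.map b L / 2 := by
    rw [← setLIntegral_condProbOf hb W hL, ENNReal.div_eq_inv_mul, ← one_div,
      ← setLIntegral_const]
    exact setLIntegral_mono measurable_const fun y (hy : ¬ _) => (not_le.1 hy).le
  have hle : P.map b L / 2 + P.map b L / 2 ≤ P.map b L / 2 + P Wᶜ := by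
    calc P.map b L / 2 + P.map b L / 2 = P (b ⁻¹' L ∩ W) + P (b ⁻¹' L \ W) := by
          rw [ENNReal.add_halves, Measure.map_apply hb hL, measure_inter_add_sdiff _ hW]
      _ ≤ P.map b L / 2 + P Wᶜ := by
          rw [inter_comm]
          exact add_le_add hW_le (measure_mono fun ω hω => hω.2)
  have hhalf : P.map b L / 2 ≠ ∞ := ENNReal.div_ne_top (measure_ne_top _ _) two_ne_zero
  exact (ENNReal.div_le_iff' two_ne_zero ENNReal.ofNat_ne_top).1
    ((ENNReal.add_le_add_iff_left hhalf).1 hle)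

end CondProbOf

lemma ofReal_one_sub_le_measure {A : Type*} [MeasurableSpace A] {μ : Measure A}
    [IsProbabilityMeasure μ] {s : Set A} (hs : MeasurableSet s) {ε : ℝ} (hε : 0 ≤ ε)
    (h : μ sᶜ ≤ ENNReal.ofReal ε) : ENNReal.ofReal (1 - ε) ≤ μ s := by
  rw [ENNReal.ofReal_sub _ hε, ENNReal.ofReal_one, tsub_le_iff_right,
    ← prob_add_prob_compl (μ := μ) hs]
  gcongr

namespace IsDisintegration

variable {A B : Type*} [MeasurableSpace A] [MeasurableSpace B] {ν : Measure A}
  {f : A → B} {νB : Measure B} {cond : B → Measure A}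

lemma ae_ae_eq [MeasurableSingletonClass B] (h : IsDisintegration ν f νB cond) (hf : Measurable f) :
    ∀ᵐ b ∂νB, ∀ᵐ x ∂cond b, f x = b := by
  filter_upwards [h.2.1, h.2.2.1] with b hprob hb
  exact (prob_compl_eq_zero_iff (hf (measurableSet_singleton b))).2 hb

variable [IsProbabilityMeasure ν]

lemma isProbabilityMeasure (h : IsDisintegration ν f νB cond) (hf : Measurable f) :
    IsProbabilityMeasure νB := by
  rw [h.1]
  exact Measure.isProbabilityMeasure_map hf.aemeasurable

lemma aemeasurable_measure (h : IsDisintegration ν f νB cond) (hf : Measurable f) {s : Set A}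
    (hs : MeasurableSet s) : AEMeasurable (fun b => cond b s) νB := by
  have := h.isProbabilityMeasure hf
  -- Measurable minorants of `cond · s` and `cond · sᶜ` with the same integrals have sum `1` a.e.
  obtain ⟨g, hg, hgle, hgint⟩ := exists_measurable_le_lintegral_eq νB fun b => cond b s
  obtain ⟨k, _, hkle, hkint⟩ := exists_measurable_le_lintegral_eq νB fun b => cond b sᶜ
  have hcompl : ∀ᵐ b ∂νB, cond b s + cond b sᶜ = 1 :=
    h.2.1.mono fun b _ => prob_add_prob_compl hs
  have hint : ∫⁻ b, g b + k b ∂νB = 1 := by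
    rw [lintegral_add_left hg, ← hgint, ← hkint, ← h.2.2.2 s hs, ← h.2.2.2 sᶜ hs.compl,
      prob_add_prob_compl hs]
  have hgk : (fun b => g b + k b) =ᵐ[νB] 1 := by
    refine ae_eq_of_ae_le_of_lintegral_le ?_ (hint ▸ ENNReal.one_ne_top) aemeasurable_one ?_
    · filter_upwards [hcompl] with b hb
      exact (add_le_add (hgle b) (hkle b)).trans hb.le
    · rw [hint, Pi.one_def, lintegral_one, measure_univ]
  refine ⟨g, hg, ?_⟩
  filter_upwards [hcompl, hgk] with b hb hgkb
  have hkb : k b ≠ ∞ := ne_top_of_le_ne_top ENNReal.one_ne_top (le_add_self.trans hgkb.le)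
  refine le_antisymm ((ENNReal.add_le_add_iff_right hkb).1 ?_) (hgle b)
  calc cond b s + k b ≤ cond b s + cond b sᶜ := by gcongr; exact hkle b
    _ = g b + k b := hb.trans hgkb.symm

lemma aemeasurable_lintegral_and_lintegral_lintegral (h : IsDisintegration ν f νB cond)
    (hf : Measurable f) {φ : A → ℝ≥0∞} (hφ : Measurable φ) :
    AEMeasurable (fun b => ∫⁻ x, φ x ∂cond b) νB ∧
      ∫⁻ b, ∫⁻ x, φ x ∂cond b ∂νB = ∫⁻ x, φ x ∂ν := by
  refine Measurable.ennreal_induction ?_ ?_ ?_ hφ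
  · intro c s hs
    have hcond := h.aemeasurable_measure hf hs
    simp only [lintegral_indicator_const hs]
    exact ⟨hcond.const_mul _, by rw [lintegral_const_mul'' _ hcond, ← h.2.2.2 s hs]⟩
  · intro φ ψ _ hφ _ ihφ ihψ
    simp only [Pi.add_apply, lintegral_add_left hφ]
    exact ⟨ihφ.1.add ihψ.1, by rw [lintegral_add_left' ihφ.1, ihφ.2, ihψ.2]⟩
  · intro φ hφ hmono ih
    simp only [lintegral_iSup hφ hmono]
    refine ⟨AEMeasurable.iSup fun n => (ih n).1, ?_⟩
    rw [lintegral_iSup' (fun n => (ih n).1)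
      (Eventually.of_forall fun b n m hnm => lintegral_mono (hmono hnm))]
    simp only [(ih _).2]

lemma aemeasurable_lintegral (h : IsDisintegration ν f νB cond) (hf : Measurable f)
    {φ : A → ℝ≥0∞} (hφ : Measurable φ) : AEMeasurable (fun b => ∫⁻ x, φ x ∂cond b) νB :=
  (h.aemeasurable_lintegral_and_lintegral_lintegral hf hφ).1

lemma lintegral_lintegral (h : IsDisintegration ν f νB cond) (hf : Measurable f)
    {φ : A → ℝ≥0∞} (hφ : Measurable φ) : ∫⁻ b, ∫⁻ x, φ x ∂cond b ∂νB = ∫⁻ x, φ x ∂ν :=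
  (h.aemeasurable_lintegral_and_lintegral_lintegral hf hφ).2

lemma ae_ae (h : IsDisintegration ν f νB cond) (hf : Measurable f) {Q : A → Prop}
    (hQ : ∀ᵐ x ∂ν, Q x) : ∀ᵐ b ∂νB, ∀ᵐ x ∂cond b, Q x := by
  obtain ⟨s, hs, hsm, hs0⟩ := exists_measurable_superset_of_null (ae_iff.1 hQ)
  rw [h.2.2.2 s hsm, lintegral_eq_zero_iff' (h.aemeasurable_measure hf hsm)] at hs0
  filter_upwards [hs0] with b hb
  exact measure_mono_null hs hb

lemma exists_forall_ofReal_one_sub_le (h : IsDisintegration ν f νB cond) (hf : Measurable f)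
    {F : Set A} (hF : MeasurableSet F) {ε : ℝ} (hε : 0 < ε)
    (hνF : ν Fᶜ ≤ ENNReal.ofReal ε * ENNReal.ofReal ε) :
    ∃ D : Set B, MeasurableSet D ∧ ENNReal.ofReal (1 - ε) ≤ νB D ∧
      ∀ᵐ η ∂νB, η ∈ D → ENNReal.ofReal (1 - ε) ≤ cond η F := by
  have := h.isProbabilityMeasure hf
  obtain ⟨g, hg, hcond⟩ := h.aemeasurable_measure hf hF.compl
  have hD : MeasurableSet {η | g η ≤ ENNReal.ofReal ε} := measurableSet_le hg measurable_const
  refine ⟨_, hD, ofReal_one_sub_le_measure hD hε.le ?_, ?_⟩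
  · have hmarkov : ENNReal.ofReal ε * νB {η | ENNReal.ofReal ε ≤ g η} ≤
        ENNReal.ofReal ε * ENNReal.ofReal ε :=
      calc _ ≤ ∫⁻ η, g η ∂νB := mul_meas_ge_le_lintegral hg _
        _ = ν Fᶜ := by rw [h.2.2.2 _ hF.compl, lintegral_congr_ae hcond]
        _ ≤ _ := hνF
    rw [ENNReal.mul_le_mul_iff_right (ENNReal.ofReal_pos.2 hε).ne' ENNReal.ofReal_ne_top]
      at hmarkov
    have hsub : {η | g η ≤ ENNReal.ofReal ε}ᶜ ⊆ {η | ENNReal.ofReal ε ≤ g η} :=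
      fun η (hη : ¬ g η ≤ ENNReal.ofReal ε) => (not_le.1 hη).le
    exact (measure_mono hsub).trans hmarkov
  · filter_upwards [hcond, h.2.1] with η hη _ hηD
    exact ofReal_one_sub_le_measure hF hε.le (hη.trans_le hηD)

variable [MeasurableSingletonClass B]

lemma setLIntegral_lintegral (h : IsDisintegration ν f νB cond) (hf : Measurable f)
    {φ : A → ℝ≥0∞} (hφ : Measurable φ) {T : Set B} (hT : MeasurableSet T) :
    ∫⁻ b in T, ∫⁻ x, φ x ∂cond b ∂νB = ∫⁻ x in f ⁻¹' T, φ x ∂ν := by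
  rw [← lintegral_indicator (hf hT), ← h.lintegral_lintegral hf (hφ.indicator (hf hT)),
    ← lintegral_indicator hT]
  refine lintegral_congr_ae ?_
  filter_upwards [h.ae_ae_eq hf] with b hb
  have hfib : ∀ᵐ x ∂cond b, (f ⁻¹' T).indicator φ x = T.indicator (fun _ => φ x) b :=
    hb.mono fun x hx => by simp only [indicator_apply, mem_preimage, hx]
  rw [lintegral_congr_ae hfib]
  by_cases hbT : b ∈ T <;> simp only [hbT, indicator_of_mem, indicator_of_notMem,
    not_false_eq_true, lintegral_zero]

variable {Ω G ι : Type*} [MeasurableSpace Ω] {P : Measure Ω}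
  [IsProbabilityMeasure P] {b : Ω → A} {K M : ℝ≥0∞}

lemma ae_lintegral_condProbOf_le (h : IsDisintegration (P.map b) f νB cond) (hf : Measurable f)
    (hb : Measurable b) {E : Set Ω}
    (hK : ∀ T, MeasurableSet T → P (E ∩ b ⁻¹' (f ⁻¹' T)) ≤ K * νB T) :
    ∀ᵐ η ∂νB, ∫⁻ y, condProbOf P b E y ∂cond η ≤ K := by
  have := Measure.isProbabilityMeasure_map (μ := P) hb.aemeasurable
  have := h.isProbabilityMeasure hf
  refine ae_le_of_forall_setLIntegral_le_of_sigmaFinite₀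
    (h.aemeasurable_lintegral hf (measurable_condProbOf P b E)) fun T hT _ => ?_
  rw [h.setLIntegral_lintegral hf (measurable_condProbOf P b E) hT,
    setLIntegral_condProbOf hb E (hf hT), setLIntegral_const]
  exact hK T hT

/- Over a typical fibre, the conditional probabilities of the pieces `E x` add up to at least
`1 / 2` on the set in question, only `M` of them do not vanish there, and each has mean at most
`K`. -/
lemma ae_measure_inter_condProbOf_ge_half_le [Countable G]
    (h : IsDisintegration (P.map b) f νB cond) (hf : Measurable f) (hb : Measurable b)
    {E : G → Set Ω} (hE : ∀ x, MeasurableSet (E x)) (hd : Pairwise (Function.onFun Disjoint E))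
    {S : G → Set A} (hS : ∀ x, MeasurableSet (S x)) (hES : ∀ x, MapsTo b (E x) (S x))
    (hK : ∀ x T, MeasurableSet T → P (E x ∩ b ⁻¹' (f ⁻¹' T)) ≤ K * νB T) {U : ι → Set A}
    (hM : ∀ i η, ∃ J : Finset G, J.card ≤ M ∧
      ∀ x, (S x ∩ U i ∩ f ⁻¹' {η}).Nonempty → x ∈ J) :
    ∀ᵐ η ∂νB, ∀ i, cond η (U i ∩ {y | 1 / 2 ≤ condProbOf P b (⋃ x, E x) y}) ≤ 2 * (M * K) := by
  have := Measure.isProbabilityMeasure_map (μ := P) hb.aemeasurable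
  filter_upwards [h.ae_ae_eq hf, ae_all_iff.2 fun x => h.ae_lintegral_condProbOf_le hf hb (hK x),
    h.ae_ae hf (condProbOf_iUnion_ae_eq hb hE hd),
    h.ae_ae hf (ae_all_iff.2 fun x => ae_condProbOf_eq_zero hb (hS x) (hES x))]
    with η hfib hint hsum hzero i
  obtain ⟨J, hJM, hJ⟩ := hM i η
  have hsub : cond η (U i ∩ {y | 1 / 2 ≤ condProbOf P b (⋃ x, E x) y}) ≤
      cond η {y | 1 / 2 ≤ ∑ x ∈ J, condProbOf P b (E x) y} := by
    refine measure_mono_ae ?_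
    filter_upwards [hfib, hsum, hzero] with y hfy hsumy hzeroy ⟨hyU, hy⟩
    rw [mem_ofPred_eq, hsumy, tsum_eq_sum fun x hx => hzeroy x fun hyS => hx (hJ x ?_)] at hy
    · exact hy
    · exact ⟨y, ⟨hyS, hyU⟩, hfy⟩
  have hmarkov := mul_meas_ge_le_lintegral (μ := cond η)
    (Finset.measurable_fun_sum J fun x _ => measurable_condProbOf P b (E x)) (1 / 2)
  rw [lintegral_finsetSum J fun x _ => measurable_condProbOf P b (E x), one_div,
    ← ENNReal.div_eq_inv_mul, ENNReal.div_le_iff' two_ne_zero ENNReal.ofNat_ne_top] at hmarkov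
  refine hsub.trans ((one_div (2 : ℝ≥0∞) ▸ hmarkov).trans ?_)
  gcongr
  calc ∑ x ∈ J, ∫⁻ y, condProbOf P b (E x) y ∂cond η ≤ J.card • K :=
        Finset.sum_le_card_nsmul _ _ _ fun x _ => hint x
    _ ≤ M * K := by
        rw [nsmul_eq_mul]
        gcongr

end IsDisintegration

/-! ### Shadows -/

section Shadow

variable {X : Type*} [MetricSpace X] {o x y : X} {δ s t : ℝ} {ξ ζ : Boundary X o}

/-- The shadow of `x` seen from `o` at depth `t`: the boundary points `ξ` represented by a
sequence whose Gromov products with `x` are eventually at least `t`. -/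
def shadow (o : X) (t : ℝ) (x : X) : Set (Boundary X o) :=
  {ξ | ∃ u : DivSeq X o, mkB o u = ξ ∧ GpEventuallyGE o t (fun _ => x) u.1}

lemma shadow_subset_shadow (hst : s ≤ t) : shadow o t x ⊆ shadow o s x :=
  fun _ ⟨u, hu, h⟩ => ⟨u, hu, h.mono hst⟩

lemma mem_shadow_of_qB_lt (hδ : IsHyperbolicWith X δ) (hξ : ξ ∈ shadow o t x)
    (h : qB o ξ ζ < Real.exp (-s)) : ζ ∈ shadow o (min t s - δ) x := by
  obtain ⟨u, rfl, hu⟩ := hξ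
  obtain ⟨v, rfl⟩ := Quot.exists_rep ζ
  exact ⟨v, rfl, hu.trans hδ (gpEventuallyGE_of_qB_lt hδ h)⟩

lemma mem_shadow_of_qB_lt_symm (hδ : IsHyperbolicWith X δ) (hζ : ζ ∈ shadow o t x)
    (h : qB o ξ ζ < Real.exp (-s)) : ξ ∈ shadow o (min t s - δ) x := by
  obtain ⟨v, rfl, hv⟩ := hζ
  obtain ⟨u, rfl⟩ := Quot.exists_rep ξ
  exact ⟨u, rfl, hv.trans hδ (gpEventuallyGE_of_qB_lt hδ h).symm⟩

lemma dist_le_of_mem_shadow (hδ : IsHyperbolicWith X δ) (hx : ξ ∈ shadow o t x)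
    (hy : ξ ∈ shadow o t y) : dist x y ≤ dist o x + dist o y - 2 * t + 4 * δ := by
  obtain ⟨u, rfl, hu⟩ := hx
  obtain ⟨v, hvu, hv⟩ := hy
  have huv := bndRel_iff.1 ((mkB_eq_iff hδ).1 hvu.symm) t
  have hxv := hu.trans hδ huv
  rw [min_self] at hxv
  linarith [hxv.dist_le_of_const hδ (hv.mono (sub_le_self t (hδ.nonneg o)))]

lemma exists_measurableSet_shadow_subset (hδ : IsHyperbolicWith X δ) (o : X) (t : ℝ) (x : X) :
    ∃ S, MeasurableSet S ∧ shadow o t x ⊆ S ∧ S ⊆ shadow o (t - 4 * δ - 1) x := by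
  rcases (shadow o t x).eq_empty_or_nonempty with hempty | ⟨ξ, hξ⟩
  · exact ⟨∅, .empty, hempty.subset, empty_subset _⟩
  refine ⟨qball (qB o) ξ (Real.exp (-(t - 3 * δ - 1))), measurableSet_qball _ _,
    fun ζ hζ => ?_, fun ζ hζ => shadow_subset_shadow ?_ (mem_shadow_of_qB_lt hδ hξ hζ)⟩
  · obtain ⟨u, rfl, hu⟩ := hξ
    obtain ⟨v, rfl, hv⟩ := hζ
    refine ((hu.symm.trans hδ hv).qB_lt hδ).trans_eq ?_
    rw [min_self]
    ring_nf
  · have := hδ.nonneg o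
    rw [min_eq_right (by linarith)]
    linarith

end Shadow

lemma exists_finset_card_le_ncard {G : Type*} [Group G] {f : G → ℝ} {r : ℝ}
    (hfin : {g | f g < r}.Finite) {S : Set G} (hS : ∀ x ∈ S, ∀ y ∈ S, f (x⁻¹ * y) < r) :
    ∃ J : Finset G, J.card ≤ {g | f g < r}.ncard ∧ S ⊆ J := by
  classical
  rcases S.eq_empty_or_nonempty with rfl | ⟨x, hx⟩
  · exact ⟨∅, Nat.zero_le _, empty_subset _⟩
  refine ⟨hfin.toFinset.image (x * ·), ?_, fun y hy => ?_⟩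
  · rw [ncard_eq_toFinset_card _ hfin]
    exact Finset.card_image_le
  · rw [Finset.mem_coe, Finset.mem_image]
    exact ⟨x⁻¹ * y, hfin.mem_toFinset.2 (hS x hx y hy), mul_inv_cancel_left x y⟩

lemma exists_finset_of_mem_shadow {G X Xs : Type*} [Group G] [MetricSpace X] [MetricSpace Xs]
    {δ δs R Rs t ts r : ℝ} (hδ : IsHyperbolicWith X δ) (hδs : IsHyperbolicWith Xs δs) {o : X}
    {os : Xs} {ρ : G →* (X ≃ᵢ X)} {ρs : G →* (Xs ≃ᵢ Xs)}
    (hfin : {g | dist (o, os) (ρ g o, ρs g os) < r}.Finite) (hr : 2 * (R - t) + 4 * δ < r)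
    (hrs : 2 * (Rs - ts) + 4 * δs < r) (ξ : Boundary X o) (η : Boundary Xs os) :
    ∃ J : Finset G, J.card ≤ {g | dist (o, os) (ρ g o, ρs g os) < r}.ncard ∧
      ∀ g, dist o (ρ g o) ≤ R → dist os (ρs g os) ≤ Rs → ξ ∈ shadow o t (ρ g o) →
        η ∈ shadow os ts (ρs g os) → g ∈ J := by
  let S : Set G := {g | (dist o (ρ g o) ≤ R ∧ ξ ∈ shadow o t (ρ g o)) ∧
    dist os (ρs g os) ≤ Rs ∧ η ∈ shadow os ts (ρs g os)}
  have hS : ∀ x ∈ S, ∀ y ∈ S, dist (o, os) (ρ (x⁻¹ * y) o, ρs (x⁻¹ * y) os) < r := by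
    rintro x ⟨⟨hxR, hxξ⟩, hxRs, hxη⟩ y ⟨⟨hyR, hyξ⟩, hyRs, hyη⟩
    rw [Prod.dist_eq, max_lt_iff, dist_orbit_inv_mul, dist_orbit_inv_mul]
    constructor
    · linarith [dist_le_of_mem_shadow hδ hxξ hyξ]
    · linarith [dist_le_of_mem_shadow hδs hxη hyη]
  obtain ⟨J, hcard, hJ⟩ := exists_finset_card_le_ncard hfin hS
  exact ⟨J, hcard, fun g h₁ h₂ h₃ h₄ => hJ ⟨⟨h₁, h₃⟩, h₂, h₄⟩⟩

/-! ### Typical trajectories -/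

lemma exists_measurableSet_forall_ge {Ω : Type*} [MeasurableSpace Ω] {P : Measure Ω}
    [IsFiniteMeasure P] {Q : ℕ → Ω → Prop} (hQm : ∀ n, NullMeasurableSet {ω | Q n ω} P)
    (hQ : ∀ᵐ ω ∂P, ∀ᶠ n in atTop, Q n ω) {κ : ℝ≥0∞} (hκ : κ ≠ 0) :
    ∃ (N : ℕ) (W : Set Ω), MeasurableSet W ∧ P Wᶜ ≤ κ ∧ ∀ n ≥ N, ∀ ω ∈ W, Q n ω := by
  let B (N : ℕ) : Set Ω := ⋃ n ≥ N, {ω | Q n ω}ᶜ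
  have hB (N : ℕ) : NullMeasurableSet (B N) P :=
    .iUnion fun n => .iUnion fun _ => (hQm n).compl
  have hanti : Antitone B := fun N M hNM =>
    biUnion_subset_biUnion_left fun n (hn : M ≤ n) => hNM.trans hn
  have hzero : P (⋂ N, B N) = 0 := by
    refine measure_mono_null (fun ω hω => ?_) (ae_iff.1 hQ)
    rw [mem_ofPred_eq, eventually_atTop]
    rintro ⟨N, hN⟩
    obtain ⟨n, hn, hnω⟩ := mem_iUnion₂.1 (mem_iInter.1 hω N)
    exact hnω (hN n hn)
  have hlim := tendsto_measure_iInter_atTop hB hanti ⟨0, measure_ne_top P _⟩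
  rw [hzero] at hlim
  obtain ⟨N, hN⟩ := (hlim.eventually_le_const (pos_iff_ne_zero.2 hκ)).exists
  refine ⟨N, (toMeasurable P (B N))ᶜ, (measurableSet_toMeasurable _ _).compl, ?_,
    fun n hn ω hω => ?_⟩
  · rwa [compl_compl, measure_toMeasurable]
  · by_contra hQω
    exact hω (subset_toMeasurable _ _ (mem_iUnion₂.2 ⟨n, hn, hQω⟩))

section TypicalTrajectory

/-- At time `n` the sequence `z` moves towards the boundary point `ξ` at speed `l`, up to an
error `τ * n`. -/
structure IsTrackedAt {X : Type*} [MetricSpace X] (o : X) (z : ℕ → X) (ξ : Boundary X o)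
    (l τ : ℝ) (n : ℕ) : Prop where
  dist_le : dist o (z n) ≤ (l + τ) * n
  forall_le_gp : ∀ m ≥ n, (l - τ) * n ≤ gp o (z n) (z m)
  eq_mkB : ∃ h : IsDivergent o z, ξ = mkB o ⟨z, h⟩

lemma IsTrackedAt.mem_shadow {X : Type*} [MetricSpace X] {o : X} {z : ℕ → X}
    {ξ : Boundary X o} {l τ : ℝ} {n : ℕ} (h : IsTrackedAt o z ξ l τ n) :
    ξ ∈ shadow o ((l - τ) * n) (z n) := by
  obtain ⟨hz, hξ⟩ := h.eq_mkB
  exact ⟨⟨z, hz⟩, hξ.symm,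
    .const_of_eventually (eventually_atTop.2 ⟨n, fun m hm => h.forall_le_gp m hm⟩)⟩

variable {G : Type*} [Group G] [Countable G] [MeasurableSpace G] [DiscreteMeasurableSpace G]
  {p : G → ℝ≥0∞} {P : Measure (ℕ → G)} {X : Type*} [MetricSpace X] {o : X} {ρ : G →* (X ≃ᵢ X)}

lemma nullMeasurableSet_isTrackedAt {b : (ℕ → G) → Boundary X o} {l τ : ℝ}
    (hconv : ∀ᵐ ω ∂P, ∃ h : IsDivergent o fun n => ρ (walk ω n) o, b ω = mkB o ⟨_, h⟩) (n : ℕ) :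
    NullMeasurableSet {ω | IsTrackedAt o (fun k => ρ (walk ω k) o) (b ω) l τ n} P := by
  have hdist : MeasurableSet {ω : ℕ → G | dist o (ρ (walk ω n) o) ≤ (l + τ) * n} :=
    measurable_walk n (.of_discrete (s := {x | dist o (ρ x o) ≤ (l + τ) * n}))
  have hgp (m : ℕ) :
      MeasurableSet {ω : ℕ → G | (l - τ) * n ≤ gp o (ρ (walk ω n) o) (ρ (walk ω m) o)} :=
    ((measurable_walk n).prodMk (measurable_walk m))
      (.of_discrete (s := {x : G × G | (l - τ) * n ≤ gp o (ρ x.1 o) (ρ x.2 o)}))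
  refine (hdist.inter (.iInter fun m => .iInter fun _ : m ≥ n => hgp m)).nullMeasurableSet.congr ?_
  filter_upwards [hconv] with ω hω
  refine propext ⟨fun h => ⟨h.1, mem_iInter₂.1 h.2, hω⟩, fun h => ⟨h.dist_le, ?_⟩⟩
  exact mem_iInter₂.2 h.forall_le_gp

namespace IsRWMeasure

lemma ae_eventually_isTrackedAt (hP : IsRWMeasure p P) {δ l τ : ℝ} (hδ : IsHyperbolicWith X δ)
    (hmom : FiniteFirstMoment p (orbitSeminorm ρ o)) (hl : HasDrift p (orbitSeminorm ρ o) l)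
    (hτ : 0 < τ) {b : (ℕ → G) → Boundary X o}
    (hconv : ∀ᵐ ω ∂P, ∃ h : IsDivergent o fun n => ρ (walk ω n) o, b ω = mkB o ⟨_, h⟩) :
    ∀ᵐ ω ∂P, ∀ᶠ n : ℕ in atTop, IsTrackedAt o (fun k => ρ (walk ω k) o) (b ω) l τ n := by
  filter_upwards [hP.ae_eventually_dist_orbit_walk_le hmom hl (lt_add_of_pos_right l hτ),
    hP.ae_eventually_forall_mul_le_gp_walk hδ hmom hl (sub_lt_self l hτ), hconv]
    with ω hdist hgp hω
  filter_upwards [hdist, hgp] with n hn hn'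
  exact ⟨hn, hn', hω⟩

lemma ae_eventually_piN_walk_le (hP : IsRWMeasure p P)
    (hH : FiniteFirstMoment p fun x => -Real.log (p x).toReal) {h c : ℝ} (hh : HasEntropy p h)
    (hc : c < h) : ∀ᵐ ω ∂P, ∀ᶠ n : ℕ in atTop,
      piN p n (walk ω n) ≤ ENNReal.ofReal (Real.exp (-(c * n))) := by
  filter_upwards [hP.ae_tendsto_neg_log_piN_walk_div hH hh, hP.ae_piN_walk_ne_zero]
    with ω hlim hω
  filter_upwards [hlim.eventually_const_lt hc, eventually_gt_atTop 0] with n hn hn0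
  have hfin := hP.piN_ne_top n (walk ω n)
  rw [lt_div_iff₀ (by positivity), lt_neg] at hn
  rw [ENNReal.le_ofReal_iff_toReal_le hfin (Real.exp_pos _).le,
    ← Real.log_le_iff_le_exp (ENNReal.toReal_pos (hω n) hfin)]
  exact hn.le

end IsRWMeasure

variable {Xs : Type*} [MetricSpace Xs] {os : Xs} {ρs : G →* (Xs ≃ᵢ Xs)}
  {b : (ℕ → G) → Boundary X o × Boundary Xs os} {l ls h c τ : ℝ}

/-- At time `n` the trajectory `ω` follows, up to an error `τ * n`, the asymptotic behaviour given
by the drifts `l` and `ls` in the two factors, by the entropy `h`, and by the rate of decay `c` of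
the Radon–Nikodym cocycle of the boundary point in the second factor. -/
structure IsTypicalAt (p : G → ℝ≥0∞) (P : Measure (ℕ → G)) (ρ : G →* (X ≃ᵢ X))
    (ρs : G →* (Xs ≃ᵢ Xs)) (b : (ℕ → G) → Boundary X o × Boundary Xs os) (l ls h c τ : ℝ)
    (ω : ℕ → G) (n : ℕ) : Prop where
  tracked_fst : IsTrackedAt o (fun k => ρ (walk ω k) o) (b ω).1 l τ n
  tracked_snd : IsTrackedAt os (fun k => ρs (walk ω k) os) (b ω).2 ls τ n
  piN_le : piN p n (walk ω n) ≤ ENNReal.ofReal (Real.exp (-((h - τ) * n)))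
  inv_le_cocycle : (ENNReal.ofReal (Real.exp ((c + τ) * n)))⁻¹ ≤
    reciprocalCocycle (P.map fun ω => (b ω).2) (fun g => bAct os (ρs g)) (fun ω => (b ω).2) n ω

lemma nullMeasurableSet_isTypicalAt (hb : Measurable b)
    (hconv : ∀ᵐ ω ∂P, ∃ (h₁ : IsDivergent o fun n => ρ (walk ω n) o)
      (h₂ : IsDivergent os fun n => ρs (walk ω n) os), b ω = (mkB o ⟨_, h₁⟩, mkB os ⟨_, h₂⟩))
    (n : ℕ) : NullMeasurableSet {ω | IsTypicalAt p P ρ ρs b l ls h c τ ω n} P := by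
  have hfst := nullMeasurableSet_isTrackedAt (b := fun ω => (b ω).1) (l := l) (τ := τ)
    (hconv.mono fun ω ⟨h₁, _, hω⟩ => ⟨h₁, congrArg Prod.fst hω⟩) n
  have hsnd := nullMeasurableSet_isTrackedAt (b := fun ω => (b ω).2) (l := ls) (τ := τ)
    (hconv.mono fun ω ⟨_, h₂, hω⟩ => ⟨h₂, congrArg Prod.snd hω⟩) n
  have hpi : MeasurableSet {ω : ℕ → G |
      piN p n (walk ω n) ≤ ENNReal.ofReal (Real.exp (-((h - τ) * n)))} :=
    measurable_walk n
      (.of_discrete (s := {x | piN p n x ≤ ENNReal.ofReal (Real.exp (-((h - τ) * n)))}))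
  have hcoc := measurableSet_le (f := fun _ => (ENNReal.ofReal (Real.exp ((c + τ) * n)))⁻¹)
    measurable_const (measurable_reciprocalCocycle hb.snd (P.map fun ω => (b ω).2)
      (fun g => bAct os (ρs g)) n)
  refine ((hfst.inter hsnd).inter (hpi.inter hcoc).nullMeasurableSet).congr (.of_eq ?_)
  ext ω
  exact ⟨fun ⟨⟨h₁, h₂⟩, h₃, h₄⟩ => ⟨h₁, h₂, h₃, h₄⟩, fun ⟨h₁, h₂, h₃, h₄⟩ => ⟨⟨h₁, h₂⟩, h₃, h₄⟩⟩

lemma IsRWMeasure.ae_eventually_isTypicalAt (hP : IsRWMeasure p P) {δ δs : ℝ}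
    (hδ : IsHyperbolicWith X δ) (hδs : IsHyperbolicWith Xs δs)
    (hmom : FiniteFirstMoment p (orbitSeminorm ρ o)) (hl : HasDrift p (orbitSeminorm ρ o) l)
    (hmoms : FiniteFirstMoment p (orbitSeminorm ρs os)) (hls : HasDrift p (orbitSeminorm ρs os) ls)
    (hH : FiniteFirstMoment p fun x => -Real.log (p x).toReal) (hh : HasEntropy p h)
    (hconv : ∀ᵐ ω ∂P, ∃ (h₁ : IsDivergent o fun n => ρ (walk ω n) o)
      (h₂ : IsDivergent os fun n => ρs (walk ω n) os), b ω = (mkB o ⟨_, h₁⟩, mkB os ⟨_, h₂⟩))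
    (hbs : IsEquivariantBoundaryMap P (fun g => bAct os (ρs g)) fun ω => (b ω).2)
    (hc : ∫ ω, logTranslateDensity (P.map fun ω => (b ω).2) (fun g => bAct os (ρs g))
      (fun ω => (b ω).2) ω ∂P = c) (hτ : 0 < τ) :
    ∀ᵐ ω ∂P, ∀ᶠ n in atTop, IsTypicalAt p P ρ ρs b l ls h c τ ω n := by
  have hfst := hP.ae_eventually_isTrackedAt (b := fun ω => (b ω).1) hδ hmom hl hτ
    (hconv.mono fun ω ⟨h₁, _, hω⟩ => ⟨h₁, congrArg Prod.fst hω⟩)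
  have hsnd := hP.ae_eventually_isTrackedAt (b := fun ω => (b ω).2) hδs hmoms hls hτ
    (hconv.mono fun ω ⟨_, h₂, hω⟩ => ⟨h₂, congrArg Prod.snd hω⟩)
  filter_upwards [hfst, hsnd, hP.ae_eventually_piN_walk_le hH hh (sub_lt_self h hτ),
    hbs.ae_eventually_inv_le_reciprocalCocycle hP hH (hc.trans_lt (lt_add_of_pos_right c hτ))]
    with ω h₁ h₂ h₃ h₄
  filter_upwards [h₁, h₂, h₃, h₄] with n h₁ h₂ h₃ h₄
  exact ⟨h₁, h₂, h₃, h₄⟩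

section FixedTime

variable {δ δs : ℝ} {W : Set (ℕ → G)} {n : ℕ}
  (hW : ∀ ω ∈ W, IsTypicalAt p P ρ ρs b l ls h c τ ω n)

include hW in
lemma measure_inter_walk_eq_inter_preimage_le (hP : IsRWMeasure p P)
    (hbs : IsEquivariantBoundaryMap P (fun g => bAct os (ρs g)) fun ω => (b ω).2)
    (hWm : MeasurableSet W) (x : G) {T : Set (Boundary Xs os)} (hT : MeasurableSet T) :
    P (W ∩ {ω | walk ω n = x} ∩ b ⁻¹' (Prod.snd ⁻¹' T)) ≤
      ENNReal.ofReal (Real.exp ((c - h + 2 * τ) * n)) * P.map (fun ω => (b ω).2) T := by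
  rcases (W ∩ {ω | walk ω n = x}).eq_empty_or_nonempty with hempty | ⟨ω, hω, rfl⟩
  · rw [hempty, empty_inter, measure_empty]
    exact zero_le
  refine (hbs.measure_inter_preimage_le hP (hWm.inter (measurableSet_walk_eq n _))
    (fun ω' hω' => hω'.2) (ENNReal.ofReal_pos.2 (Real.exp_pos _)).ne' ENNReal.ofReal_ne_top
    (fun ω' hω' => (hW ω' hω'.1).inv_le_cocycle) hT).trans ?_
  rw [← mul_assoc]
  gcongr
  calc ENNReal.ofReal (Real.exp ((c + τ) * n)) * piN p n (walk ω n)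
      ≤ ENNReal.ofReal (Real.exp ((c + τ) * n)) *
          ENNReal.ofReal (Real.exp (-((h - τ) * n))) := by
        gcongr
        exact (hW ω hω).piN_le
    _ = ENNReal.ofReal (Real.exp ((c - h + 2 * τ) * n)) := by
        rw [← ENNReal.ofReal_mul (Real.exp_pos _).le, ← Real.exp_add]
        ring_nf

omit [Countable G] [DiscreteMeasurableSpace G] in
include hW in
lemma exists_measurableSet_mapsTo_shadow (hδ : IsHyperbolicWith X δ)
    (hδs : IsHyperbolicWith Xs δs) (x : G) :
    ∃ S, MeasurableSet S ∧ MapsTo b (W ∩ {ω | walk ω n = x}) S ∧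
      ∀ y ∈ S, (dist o (ρ x o) ≤ (l + τ) * n ∧ dist os (ρs x os) ≤ (ls + τ) * n) ∧
        y.1 ∈ shadow o ((l - τ) * n - 4 * δ - 1) (ρ x o) ∧
        y.2 ∈ shadow os ((ls - τ) * n - 4 * δs - 1) (ρs x os) := by
  obtain ⟨S, hSm, hS, hS'⟩ :=
    exists_measurableSet_shadow_subset hδ o ((l - τ) * n) (ρ x o)
  obtain ⟨Ss, hSsm, hSs, hSs'⟩ :=
    exists_measurableSet_shadow_subset hδs os ((ls - τ) * n) (ρs x os)
  refine ⟨{_y | dist o (ρ x o) ≤ (l + τ) * n ∧ dist os (ρs x os) ≤ (ls + τ) * n} ∩ S ×ˢ Ss,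
    (MeasurableSet.const _).inter (hSm.prod hSsm), ?_, fun y hy => ⟨hy.1, hS' hy.2.1, hSs' hy.2.2⟩⟩
  rintro ω ⟨hω, rfl⟩
  exact ⟨⟨(hW ω hω).tracked_fst.dist_le, (hW ω hω).tracked_snd.dist_le⟩,
    hS (hW ω hω).tracked_fst.mem_shadow, hSs (hW ω hω).tracked_snd.mem_shadow⟩

include hW in
lemma ae_measure_qball_prod_inter_condProbOf_ge_half_le (hP : IsRWMeasure p P)
    (hδ : IsHyperbolicWith X δ) (hδs : IsHyperbolicWith Xs δs) (hb : Measurable b)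
    (hbs : IsEquivariantBoundaryMap P (fun g => bAct os (ρs g)) fun ω => (b ω).2)
    (hWm : MeasurableSet W) (hτ : 0 ≤ τ) {νs : Measure (Boundary Xs os)}
    {cond : Boundary Xs os → Measure (Boundary X o × Boundary Xs os)}
    (hdis : IsDisintegration (P.map b) Prod.snd νs cond) {r : ℝ}
    (hr : 4 * τ * n + (14 * δ + 14 * δs + 3) ≤ r)
    (hfin : {g | dist (o, os) (ρ g o, ρs g os) < r}.Finite) :
    ∀ᵐ η ∂νs, ∀ ξ, cond η (qball (qB o) ξ (Real.exp (-(l * n))) ×ˢ univ ∩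
        {y | 1 / 2 ≤ condProbOf P b W y}) ≤
      2 * ({g | dist (o, os) (ρ g o, ρs g os) < r}.ncard *
        ENNReal.ofReal (Real.exp ((c - h + 2 * τ) * n))) := by
  have := hP.1
  have hδ0 := hδ.nonneg o
  have hδs0 := hδs.nonneg os
  have hτn : 0 ≤ τ * n := by positivity
  choose S hSm hWS hS using exists_measurableSet_mapsTo_shadow hW hδ hδs
  have hνs : P.map (fun ω => (b ω).2) = νs := by
    rw [hdis.1, Measure.map_map measurable_snd hb]
    rfl
  have hWunion : ⋃ x, W ∩ {ω | walk ω n = x} = W := by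
    rw [← inter_iUnion, iUnion_eq_univ_iff.2 fun ω => ⟨walk ω n, rfl⟩, inter_univ]
  have hcount (ξ : Boundary X o) (η : Boundary Xs os) : ∃ J : Finset G,
      (J.card : ℝ≥0∞) ≤ {g | dist (o, os) (ρ g o, ρs g os) < r}.ncard ∧
      ∀ x, (S x ∩ qball (qB o) ξ (Real.exp (-(l * n))) ×ˢ univ ∩ Prod.snd ⁻¹' {η}).Nonempty →
        x ∈ J := by
    obtain ⟨J, hJ, hmem⟩ := exists_finset_of_mem_shadow (R := (l + τ) * n) (Rs := (ls + τ) * n)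
      (t := (l - τ) * n - 5 * δ - 1) (ts := (ls - τ) * n - 4 * δs - 1) hδ hδs hfin
      (by linarith) (by linarith) ξ η
    refine ⟨J, Nat.cast_le.2 hJ, ?_⟩
    rintro x ⟨y, ⟨hyS, hyξ, _⟩, rfl⟩
    obtain ⟨⟨hd, hds⟩, hy₁, hy₂⟩ := hS x y hyS
    refine hmem x hd hds (shadow_subset_shadow ?_ (mem_shadow_of_qB_lt_symm hδ hy₁ hyξ)) hy₂
    rw [min_eq_left (by linarith)]
    linarith
  have hbound := hdis.ae_measure_inter_condProbOf_ge_half_le measurable_snd hb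
    (E := fun x => W ∩ {ω | walk ω n = x}) (fun x => hWm.inter (measurableSet_walk_eq n x))
    (fun x y hxy => disjoint_left.2 fun ω hx hy => hxy (hx.2.symm.trans hy.2)) hSm hWS
    (fun x T hT => hνs ▸ measure_inter_walk_eq_inter_preimage_le hW hP hbs hWm x hT) hcount
  rwa [hWunion] at hbound

end FixedTime

end TypicalTrajectory

/-! ### The uniform bound -/

lemma FiniteFirstMoment.mono {G : Type*} {p : G → ℝ≥0∞} {f g : G → ℝ}
    (hg : FiniteFirstMoment p g) (hfg : ∀ x, f x ≤ g x) : FiniteFirstMoment p f :=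
  ne_top_of_le_ne_top hg <| ENNReal.tsum_le_tsum fun x => by
    gcongr
    exact hfg x

lemma IsDisintegration.exists_forall_ge_of_ae_eventually {Ω A B : Type*} [MeasurableSpace Ω]
    [MeasurableSpace A] [MeasurableSpace B] {P : Measure Ω} [IsProbabilityMeasure P] {b : Ω → A}
    (hb : Measurable b) {f : A → B} (hf : Measurable f) {νB : Measure B} {cond : B → Measure A}
    (h : IsDisintegration (P.map b) f νB cond) {Q : ℕ → Ω → Prop}
    (hQm : ∀ n, NullMeasurableSet {ω | Q n ω} P) (hQ : ∀ᵐ ω ∂P, ∀ᶠ n in atTop, Q n ω) {ε : ℝ}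
    (hε : 0 < ε) :
    ∃ (N : ℕ) (W : Set Ω) (D : Set B), MeasurableSet W ∧ (∀ n ≥ N, ∀ ω ∈ W, Q n ω) ∧
      MeasurableSet D ∧ ENNReal.ofReal (1 - ε) ≤ νB D ∧
      (∀ᵐ η ∂νB, η ∈ D → ENNReal.ofReal (1 - ε) ≤ cond η {y | 1 / 2 ≤ condProbOf P b W y}) ∧
      ENNReal.ofReal (1 - ε) ≤ P.map b {y | 1 / 2 ≤ condProbOf P b W y} := by
  have := Measure.isProbabilityMeasure_map (μ := P) hb.aemeasurable
  have hε' : 0 < ENNReal.ofReal ε := ENNReal.ofReal_pos.2 hε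
  have hκ : min (ENNReal.ofReal ε) (ENNReal.ofReal ε * ENNReal.ofReal ε) / 2 ≠ 0 :=
    (ENNReal.half_pos (lt_min hε' (ENNReal.mul_pos hε'.ne' hε'.ne')).ne').ne'
  obtain ⟨N, W, hWm, hWκ, hW⟩ := exists_measurableSet_forall_ge hQm hQ hκ
  have hF : MeasurableSet {y | 1 / 2 ≤ condProbOf P b W y} :=
    measurableSet_le measurable_const (measurable_condProbOf P b W)
  have hνF : P.map b {y | 1 / 2 ≤ condProbOf P b W y}ᶜ ≤
      min (ENNReal.ofReal ε) (ENNReal.ofReal ε * ENNReal.ofReal ε) :=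
    calc _ ≤ 2 * P Wᶜ := measure_condProbOf_lt_half_le hb hWm
      _ ≤ 2 * (min (ENNReal.ofReal ε) (ENNReal.ofReal ε * ENNReal.ofReal ε) / 2) := by gcongr
      _ = _ := ENNReal.mul_div_cancel two_ne_zero ENNReal.ofNat_ne_top
  obtain ⟨D, hD, hνD, hcond⟩ :=
    h.exists_forall_ofReal_one_sub_le hf hF hε (hνF.trans (min_le_right _ _))
  exact ⟨N, W, D, hWm, hW, hD, hνD, hcond,
    ofReal_one_sub_le_measure hF hε.le (hνF.trans (min_le_left _ _))⟩

lemma two_mul_natCast_mul_ofReal_exp_le {k n : ℕ} {c₀ C τ ε a : ℝ}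
    (hk : k ≤ c₀ * Real.exp (c₀ * (4 * τ * n + C))) (hε : (4 * c₀ + 2) * τ = ε) :
    2 * (k * ENNReal.ofReal (Real.exp ((a + 2 * τ) * n))) ≤
      ENNReal.ofReal (2 * c₀ * Real.exp (c₀ * C) * Real.exp (-(n * (-a - ε)))) := by
  have hexp : c₀ * (4 * τ * n + C) + (a + 2 * τ) * n = c₀ * C + -(n * (-a - ε)) := by
    rw [← hε]
    ring
  rw [← ENNReal.ofReal_natCast, ← ENNReal.ofReal_mul k.cast_nonneg, ← ENNReal.ofReal_ofNat 2,
    ← ENNReal.ofReal_mul zero_le_two]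
  refine ENNReal.ofReal_le_ofReal ?_
  calc 2 * (k * Real.exp ((a + 2 * τ) * n))
      ≤ 2 * (c₀ * Real.exp (c₀ * (4 * τ * n + C)) * Real.exp ((a + 2 * τ) * n)) := by gcongr
    _ = 2 * c₀ * Real.exp (c₀ * C) * Real.exp (-(n * (-a - ε))) := by
      rw [mul_assoc c₀, ← Real.exp_add, hexp, Real.exp_add]
      ring

theorem statement10_general
    {X Xs : Type*} [MetricSpace X] [MetricSpace Xs] (hX : IsHyperbolic X) (hXs : IsHyperbolic Xs)
    (o : X) (os : Xs) {G : Type*} [Group G] [Countable G] [MeasurableSpace G]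
    [DiscreteMeasurableSpace G] (ρ : G →* (X ≃ᵢ X)) (ρs : G →* (Xs ≃ᵢ Xs)) (p : G → ℝ≥0∞)
    (hmom : FiniteFirstMoment p fun g => dist (o, os) (ρ g o, ρs g os))
    (P : Measure (ℕ → G)) (hP : IsRWMeasure p P)
    (hgrow : FinExpGrowth fun g => dist (o, os) (ρ g o, ρs g os))
    (ν : Measure (Boundary X o × Boundary Xs os))
    (hν : IsJointHarmonic o os P (fun ω n => ρ (walk ω n) o) (fun ω n => ρs (walk ω n) os) ν)
    (νs : Measure (Boundary Xs os))
    (condν : Boundary Xs os → Measure (Boundary X o × Boundary Xs os))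
    (hdis : IsDisintegration ν Prod.snd νs condν)
    (hπ l : ℝ) (hhπ : HasEntropy p hπ) (hl : HasDrift p (fun g => dist o (ρ g o)) l)
    (hbm : ∀ g, Measurable (bAct os (ρs g)))
    (hst : ℝ) (hhst : hst = diffEntropy os (marginalStar p fun g => ρs g) νs)
    (ε : ℝ) (hε : 0 < ε) :
    ∃ (N : ℕ) (D : Set (Boundary Xs os)) (F : Set (Boundary X o × Boundary Xs os)) (Cε : ℝ),
      MeasurableSet D ∧ ENNReal.ofReal (1 - ε) ≤ νs D ∧ MeasurableSet F ∧
      (∀ᵐ η ∂νs, η ∈ D → ENNReal.ofReal (1 - ε) ≤ condν η F) ∧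
      ENNReal.ofReal (1 - ε) ≤ ν F ∧
      ∀ᵐ η ∂νs, ∀ ξ : Boundary X o, ∀ n : ℕ, N ≤ n →
        condν η ((qball (qB o) ξ (Real.exp (-(l * n))) ×ˢ univ) ∩ F)
          ≤ ENNReal.ofReal (Cε * Real.exp (-(n * (hπ - hst - ε)))) := by
  obtain ⟨δ, _, hδ⟩ := hX
  obtain ⟨δs, _, hδs⟩ := hXs
  obtain ⟨b, hb, rfl, hconv⟩ := hν
  have := hP.1
  have hH := finiteFirstMoment_neg_log hP.ne_top (fun _ => dist_nonneg) hmom hgrow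
  have hmoms : FiniteFirstMoment p (orbitSeminorm ρs os) := hmom.mono fun _ => le_max_right _ _
  obtain ⟨ls, hls⟩ := hP.exists_hasDrift hmoms
  have hbs := hP.isEquivariantBoundaryMap hbm hb.snd
    (hconv.mono fun ω ⟨_, h₂, hω⟩ => ⟨h₂, congrArg Prod.snd hω⟩)
  rw [hdis.1, Measure.map_map measurable_snd hb] at hhst
  have hc := (hbs.diffEntropy_eq_integral hP hH).symm.trans hhst.symm
  obtain ⟨c₀, hc₀, hcard⟩ := hgrow
  obtain ⟨τ, hτ, hτε⟩ : ∃ τ > 0, (4 * c₀ + 2) * τ = ε :=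
    ⟨ε / (4 * c₀ + 2), by positivity, mul_div_cancel₀ _ (by positivity)⟩
  obtain ⟨N, W, D, hWm, hW, hD, hνD, hcond, hνF⟩ := hdis.exists_forall_ge_of_ae_eventually hb
    measurable_snd (fun n => nullMeasurableSet_isTypicalAt hb hconv n)
    (hP.ae_eventually_isTypicalAt hδ hδs (hmom.mono fun _ => le_max_left _ _) hl hmoms hls hH hhπ
      hconv hbs hc hτ) hε
  refine ⟨N, D, {y | 1 / 2 ≤ condProbOf P b W y},
    2 * c₀ * Real.exp (c₀ * (14 * δ + 14 * δs + 3)), hD, hνD,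
    measurableSet_le measurable_const (measurable_condProbOf P b W), hcond, hνF, ?_⟩
  have hbound (n : ℕ) (hn : n ≥ N) :=
    have hcardn := hcard (4 * τ * n + (14 * δ + 14 * δs + 3)) (by positivity)
    (ae_measure_qball_prod_inter_condProbOf_ge_half_le (hW n hn) hP hδ hδs hb hbs hWm hτ.le hdis
      le_rfl hcardn.1).mono fun η hη ξ =>
        (hη ξ).trans (two_mul_natCast_mul_ofReal_exp_le hcardn.2 hτε)
  filter_upwards [ae_all_iff.2 fun n => ae_all_iff.2 (hbound n)] with η hη ξ n hn
  simpa only [neg_sub] using hη n hn ξ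

/-- Lemma 3.3: the uniform upper bound
`ν_π^η(B(ξ,e^{-ln}) × ∂X* ∩ F) ≤ C_ε e^{-n(h̄-ε)}` on a large set `D` of `η`'s and a
large set `F`. -/
theorem statement10
    (X Xs : Type*) [MetricSpace X] [MetricSpace Xs] [ProperSpace X] [ProperSpace Xs]
    (hX : IsHyperbolic X) (hXs : IsHyperbolic Xs)
    (hXg : IsRoughGeodesicSpace X) (hXsg : IsRoughGeodesicSpace Xs)
    (o : X) (os : Xs)
    (Γb : Subgroup ((X ≃ᵢ X) × (Xs ≃ᵢ Xs))) [Countable Γb]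
    [MeasurableSpace Γb] [DiscreteMeasurableSpace Γb]
    (p : Γb → ℝ≥0∞) (hp : IsProb p)
    (hmom : FiniteFirstMoment p fun γ : Γb => disp o os γ)
    (hμne : IsNonElementarySubgroup
      (Subgroup.closure ((fun γ : Γb => proj1 γ) '' {γ : Γb | p γ ≠ 0})))
    (hμsne : IsNonElementarySubgroup
      (Subgroup.closure ((fun γ : Γb => proj2 γ) '' {γ : Γb | p γ ≠ 0})))
    (P : Measure (ℕ → Γb)) (hP : IsRWMeasure p P)
    (hgrow : FinExpGrowth fun γ : Γb => disp o os γ)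
    (ν : Measure (Boundary X o × Boundary Xs os))
    (hν : IsJointHarmonic o os P (fun ω n => proj1 (walk ω n) o)
      (fun ω n => proj2 (walk ω n) os) ν)
    (νs : Measure (Boundary Xs os))
    (condν : Boundary Xs os → Measure (Boundary X o × Boundary Xs os))
    (hdis : IsDisintegration ν Prod.snd νs condν)
    (hπ l : ℝ) (hhπ : HasEntropy p hπ)
    (hl : HasDrift p (fun γ : Γb => dist o (proj1 γ o)) l)
    (hbm : ∀ g : Xs ≃ᵢ Xs, Measurable (bAct os g))
    (hst : ℝ)
    (hhst : hst = diffEntropy os (marginalStar p fun γ : Γb => proj2 γ) νs)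
 :
    ∀ ε : ℝ, 0 < ε →
      ∃ (N : ℕ) (D : Set (Boundary Xs os))
        (F : Set (Boundary X o × Boundary Xs os)) (Cε : ℝ),
        MeasurableSet D ∧ ENNReal.ofReal (1 - ε) ≤ νs D ∧ MeasurableSet F ∧
        (∀ᵐ η ∂νs, η ∈ D → ENNReal.ofReal (1 - ε) ≤ condν η F) ∧
        ENNReal.ofReal (1 - ε) ≤ ν F ∧
        ∀ᵐ η ∂νs, η ∈ D → ∀ ξ : Boundary X o, ∀ n : ℕ, N ≤ n →
          condν η ((qball (qB o) ξ (Real.exp (-(l * n))) ×ˢ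
              (Set.univ : Set (Boundary Xs os))) ∩ F)
            ≤ ENNReal.ofReal (Cε * Real.exp (-(n * (hπ - hst - ε)))) := by
  intro ε hε
  obtain ⟨N, D, F, Cε, hD, hνD, hF, hcond, hνF, hbound⟩ := statement10_general hX hXs o os
    ((MonoidHom.fst _ _).comp Γb.subtype) ((MonoidHom.snd _ _).comp Γb.subtype) p hmom P hP hgrow ν
    hν νs condν hdis hπ l hhπ hl (fun _ => hbm _) hst hhst ε hε
  exact ⟨N, D, F, Cε, hD, hνD, hF, hcond, hνF, hbound.mono fun _ hη _ => hη⟩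

end HMDim
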